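/- arXiv:2407.19693 — 6 statements merged into one kernel-verified Lean document; each statement's English description precedes it below -/
import Mathlib

section
/- Let k ≥ 2 and n ≥ 2k+2, and let J = (2, …, 2, 4) have k−1 entries equal to 2 followed by one entry 4 (entries summing to 2k+2). Then a (2k+1)-element subset F of [n] is contained in exactly one facet of Γ^J_n (i.e., F is a facet of D(n,2k)) if and only if F has one of the following forms: (1) F = τ ∪ {i, i+1, i+3} for some i with i+3 ≤ n and some facet τ of B([1, i−1], 2k−3); (2) F = τ ∪ {i, i+2, i+3} for some i with i+3 ≤ n and some facet τ of B([1, i−1], 2k−3); (3) F = τ ∪ {n−2, n−1, n} for some facet τ of B([1, n−3], 2k−3); (4) F = τ ∪ {1, i, i+1, i+2, i+3} for some i with 2 ≤ i ≤ n−3 and some facet τ of B([2, i−1], 2k−5). -/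
/-- `F` is a facet of `Γ^J_n`: `F = I_1 ∪ … ∪ I_m ⊆ [n]`, where `I_t` is the interval
of `J t` consecutive integers starting at `st t`, and `max I_t < min I_{t'}` for `t < t'`. -/
def GammaFacet (n m : ℕ) (J : Fin m → ℕ) (F : Finset ℕ) : Prop :=
  ∃ st : Fin m → ℕ,
    (∀ t, 1 ≤ st t ∧ st t + J t ≤ n + 1) ∧
    (∀ t t' : Fin m, t < t' → st t + J t ≤ st t') ∧
    F = Finset.univ.biUnion fun t => Finset.Ico (st t) (st t + J t)

/-- `F` is a facet of `B([a,b], 2k-1)`: `F = {i_1, i_1+1, …, i_k, i_k+1}` with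
`a ≤ i_j`, `i_j + 1 < i_{j'}` for `j < j'`, and `i_j + 1 ≤ b`. For `k = 0` the unique
facet is `∅` (the convention `B([a,b],-1) = {∅}`). -/
def BFacet (a b k : ℕ) (F : Finset ℕ) : Prop :=
  ∃ i : Fin k → ℕ,
    (∀ j, a ≤ i j ∧ i j + 1 ≤ b) ∧
    (∀ j j' : Fin k, j < j' → i j + 1 < i j') ∧
    F = Finset.univ.biUnion fun j => {i j, i j + 1}

/-- `l` is `m` disjoint pairs (first element at least `a`) followed by a tail satisfying `P`. -/
def RR (P : ℕ → List ℕ → Prop) : ℕ → ℕ → List ℕ → Prop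
  | 0, a, l => ∃ s, a ≤ s ∧ P s l
  | m + 1, a, l => ∃ i l', a ≤ i ∧ l = i :: (i + 1) :: l' ∧ RR P m (i + 2) l'

def GB (n s : ℕ) (t : List ℕ) : Prop := s + 3 ≤ n ∧ t = [s, s + 1, s + 2, s + 3]

def EB (n s : ℕ) (t : List ℕ) : Prop :=
  (s + 3 ≤ n ∧ t = [s, s + 1, s + 3]) ∨ (s + 3 ≤ n ∧ t = [s, s + 2, s + 3]) ∨
    (s + 2 = n ∧ t = [s, s + 1, s + 2])

def F4 (n : ℕ) : ℕ → ℕ → List ℕ → Prop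
  | 0, a, l => l = [a, a + 1, a + 2]
  | m + 1, a, l => ∃ t, l = a :: t ∧ RR (GB n) m (a + 1) t

lemma RR_mono {P : ℕ → List ℕ → Prop} {m a b : ℕ} {l : List ℕ} (h : b ≤ a) (hl : RR P m a l) :
    RR P m b l := by
  cases m with
  | zero => obtain ⟨s, h1, h2⟩ := hl; exact ⟨s, by omega, h2⟩
  | succ m => obtain ⟨i, l', h1, h2⟩ := hl; exact ⟨i, l', by omega, h2⟩

lemma RRG_spec {n : ℕ} : ∀ (m a : ℕ) (l : List ℕ), RR (GB n) m a l →
    l.length = 2 * m + 4 ∧ l.Pairwise (· < ·) ∧ (∀ x ∈ l, a ≤ x ∧ x ≤ n) ∧ a + 2 * m + 3 ≤ n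
  | 0, a, l, ⟨s, h1, h2, h3⟩ => by
      subst h3
      refine ⟨by simp, by simp, ?_, by omega⟩
      intro x hx
      simp at hx
      omega
  | m + 1, a, l, ⟨i, l', h1, h2, h3⟩ => by
      obtain ⟨q1, q2, q3, q4⟩ := RRG_spec m (i + 2) l' h3
      subst h2
      refine ⟨by simp [q1]; omega, ?_, ?_, by omega⟩
      · simp only [List.pairwise_cons, List.mem_cons]
        refine ⟨?_, ?_, q2⟩
        · rintro x (rfl | hx)
          · omega
          · have := q3 x hx; omega
        · intro x hx
          have := q3 x hx; omega
      · intro x hx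
        simp only [List.mem_cons] at hx
        rcases hx with rfl | rfl | hx
        · omega
        · omega
        · have := q3 x hx; omega

/-- raise the lower bound -/
lemma RRG_raise {n m a b : ℕ} {l : List ℕ} (h : RR (GB n) m a l) (hb : ∀ x ∈ l, b ≤ x) :
    RR (GB n) m b l := by
  cases m with
  | zero =>
    obtain ⟨s, h1, h2, h3⟩ := h; subst h3
    exact ⟨s, hb s (by simp), h2, rfl⟩
  | succ m =>
    obtain ⟨i, l', h1, h2, h3⟩ := h; subst h2
    exact ⟨i, l', hb i (by simp), rfl, h3⟩

lemma X_iff {n m c : ℕ} {l : List ℕ} (hc : c + 3 ≤ n) :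
    RR (GB n) m c (c :: l) ↔ F4 n m (c + 1) l := by
  cases m with
  | zero =>
    simp only [RR, GB, F4, List.cons.injEq]
    constructor
    · rintro ⟨s, h1, h2, rfl, h⟩; exact h
    · intro h; exact ⟨c, le_rfl, hc, rfl, h⟩
  | succ m =>
    simp only [RR, F4, List.cons.injEq]
    constructor
    · rintro ⟨i, l', h1, ⟨rfl, h⟩, h3⟩; exact ⟨l', h, h3⟩
    · rintro ⟨t, h, h3⟩; exact ⟨c, t, le_rfl, ⟨rfl, h⟩, h3⟩

lemma excl {n : ℕ} : ∀ (m c : ℕ) (l : List ℕ), c + 2 * m + 3 ≤ n → RR (EB n) m c l →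
    F4 n m c l → False
  | 0, c, l, hc, ⟨s, h1, h2⟩, h3 => by
      simp only [F4] at h3
      subst h3
      simp [EB] at h2
      omega
  | m + 1, c, l, hc, ⟨i, l', h1, h2, h3⟩, ⟨t, h4, h5⟩ => by
      subst h2
      simp only [List.cons.injEq] at h4
      obtain ⟨rfl, rfl⟩ := h4
      exact excl m (i + 2) l' (by omega) h3 ((X_iff (by omega)).1 h5)

lemma full_G {n : ℕ} : ∀ (m c : ℕ), c + 2 * m + 3 = n →
    RR (GB n) m c (List.range' c (2 * m + 4))
  | 0, c, h => ⟨c, le_rfl, by omega, by simp [List.range']⟩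
  | m + 1, c, h => ⟨c, List.range' (c + 2) (2 * m + 4), le_rfl,
      by simp [show 2 * (m + 1) + 4 = (2 * m + 4) + 1 + 1 by ring, List.range'_succ],
      full_G m (c + 2) (by omega)⟩

lemma full_E {n : ℕ} : ∀ (m c : ℕ), c + 2 * m + 2 = n →
    RR (EB n) m c (List.range' c (2 * m + 3))
  | 0, c, h => ⟨c, le_rfl, by right; right; exact ⟨by omega, by simp [List.range']⟩⟩
  | m + 1, c, h => ⟨c, List.range' (c + 2) (2 * m + 3), le_rfl,
      by simp [show 2 * (m + 1) + 3 = (2 * m + 3) + 1 + 1 by ring, List.range'_succ],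
      full_E m (c + 2) (by omega)⟩

lemma eq_range' : ∀ (l : List ℕ) (c : ℕ), l.Pairwise (· < ·) →
    (∀ x ∈ l, c ≤ x ∧ x < c + l.length) → l = List.range' c l.length
  | [], _, _, _ => rfl
  | f :: t, c, hp, hb => by
      simp only [List.pairwise_cons] at hp
      have hnd : t.Nodup := hp.2.imp (fun h => Nat.ne_of_lt h)
      have h1 : t.toFinset ⊆ Finset.Ico (f + 1) (c + (t.length + 1)) := by
        intro x hx
        rw [List.mem_toFinset] at hx
        have h2 := hp.1 x hx
        have h3 := hb x (by simp [hx])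
        simp at h3 ⊢
        omega
      have h2 := Finset.card_le_card h1
      rw [List.toFinset_card_of_nodup hnd, Nat.card_Ico] at h2
      have h3 := hb f (by simp)
      simp at h3
      obtain rfl : f = c := by omega
      have h4 := eq_range' t (f + 1) hp.2 (by
        intro x hx
        have h2 := hp.1 x hx
        have h3 := hb x (by simp [hx])
        simp at h3
        omega)
      simp only [List.length_cons, List.range'_succ]
      rw [← h4]

def Cp (n m a : ℕ) (l g : List ℕ) : Prop := RR (GB n) m a g ∧ l.Sublist g

lemma Cp_succ {n m a f : ℕ} {r g : List ℕ} (hr : r.length = 2 * m + 4) :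
    Cp n (m + 1) a (f :: r) g ↔
      (∃ l' g', a ≤ f ∧ r = (f + 1) :: l' ∧ g = f :: (f + 1) :: g' ∧ Cp n m (f + 2) l' g') ∨
      (a ≤ f ∧ RR (GB n) m (f + 2) r ∧ g = f :: (f + 1) :: r) ∨
      (∃ e, a ≤ e ∧ f = e + 1 ∧ RR (GB n) m (f + 1) r ∧ g = e :: f :: r) := by
  constructor
  · rintro ⟨⟨i, g', h1, rfl, h3⟩, hs⟩
    have sp := RRG_spec _ _ _ h3
    rw [List.cons_sublist_cons'] at hs
    rcases hs with hs | ⟨rfl, hs⟩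
    · rw [List.cons_sublist_cons'] at hs
      rcases hs with hs | ⟨rfl, hs⟩
      · have := hs.length_le
        simp at this; omega
      · have := hs.eq_of_length (by omega)
        subst this
        exact Or.inr (Or.inr ⟨i, h1, rfl, h3, rfl⟩)
    · rcases r with _ | ⟨x, l'⟩
      · simp at hr
      rw [List.cons_sublist_cons'] at hs
      rcases hs with hs | ⟨rfl, hs⟩
      · have := hs.eq_of_length (by omega)
        rw [this]
        exact Or.inr (Or.inl ⟨h1, h3, rfl⟩)
      · exact Or.inl ⟨l', g', h1, rfl, rfl, h3, hs⟩
  · rintro (⟨l', g', h1, rfl, rfl, h3, hs⟩ | ⟨h1, h2, rfl⟩ | ⟨e, h1, rfl, h2, rfl⟩)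
    · exact ⟨⟨f, g', h1, rfl, h3⟩, by simpa using hs⟩
    · exact ⟨⟨f, r, h1, rfl, h2⟩, by simp⟩
    · exact ⟨⟨e, r, h1, rfl, h2⟩, by simp⟩

lemma base_case {n a x y z : ℕ} (h1 : a ≤ x) (h2 : x < y) (h3 : y < z) (h4 : z ≤ n)
    (h5 : a + 3 ≤ n) :
    (∃! g, Cp n 0 a [x, y, z] g) ↔ RR (EB n) 0 a [x, y, z] ∨ F4 n 0 a [x, y, z] := by
  have hC : ∀ g, Cp n 0 a [x, y, z] g ↔
      ∃ s, a ≤ s ∧ s + 3 ≤ n ∧ s ≤ x ∧ z ≤ s + 3 ∧ g = [s, s + 1, s + 2, s + 3] := by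
    intro g
    constructor
    · rintro ⟨⟨s, q1, q2, rfl⟩, hs⟩
      have m1 := hs.subset (show x ∈ [x, y, z] by simp)
      have m2 := hs.subset (show z ∈ [x, y, z] by simp)
      simp at m1 m2
      exact ⟨s, q1, q2, by omega, by omega, rfl⟩
    · rintro ⟨s, q1, q2, q3, q4, rfl⟩
      refine ⟨⟨s, q1, q2, rfl⟩, ?_⟩
      have : (x = s ∧ y = s + 1 ∧ z = s + 2) ∨ (x = s ∧ y = s + 1 ∧ z = s + 3) ∨
        (x = s ∧ y = s + 2 ∧ z = s + 3) ∨ (x = s + 1 ∧ y = s + 2 ∧ z = s + 3) := by omega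
      rcases this with ⟨rfl, rfl, rfl⟩ | ⟨rfl, rfl, rfl⟩ | ⟨rfl, rfl, rfl⟩ | ⟨rfl, rfl, rfl⟩ <;>
        simp
  have hR : (RR (EB n) 0 a [x, y, z] ∨ F4 n 0 a [x, y, z]) ↔
      (x + 3 ≤ n ∧ y = x + 1 ∧ z = x + 3) ∨ (x + 3 ≤ n ∧ y = x + 2 ∧ z = x + 3) ∨
      (x + 2 = n ∧ y = x + 1 ∧ z = x + 2) ∨ (x = a ∧ y = a + 1 ∧ z = a + 2) := by
    simp only [RR, EB, F4, List.cons.injEq, and_true]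
    constructor
    · rintro (⟨s, h⟩ | h) <;> omega
    · intro h
      by_cases hx : x = a ∧ y = a + 1 ∧ z = a + 2
      · exact Or.inr hx
      · exact Or.inl ⟨x, by omega, by omega⟩
  rw [hR]
  simp only [hC]
  constructor
  · rintro ⟨g, ⟨s, q1, q2, q3, q4, rfl⟩, hu⟩
    by_contra hcon
    by_cases hs : a ≤ s - 1 ∧ 1 ≤ s ∧ z ≤ s - 1 + 3
    · have := hu [s - 1, s - 1 + 1, s - 1 + 2, s - 1 + 3]
        ⟨s - 1, by omega, by omega, by omega, by omega, rfl⟩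
      simp at this
      omega
    · have := hu [s + 1, s + 1 + 1, s + 1 + 2, s + 1 + 3]
        ⟨s + 1, by omega, by omega, by omega, by omega, rfl⟩
      simp at this
  · intro h
    have : ∃ s, a ≤ s ∧ s + 3 ≤ n ∧ s ≤ x ∧ z ≤ s + 3 := by
      by_cases hx : x + 3 ≤ n
      · exact ⟨x, by omega, by omega, by omega, by omega⟩
      · exact ⟨x - 1, by omega, by omega, by omega, by omega⟩
    obtain ⟨s, r1, r2, r3, r4⟩ := this
    refine ⟨_, ⟨s, r1, r2, r3, r4, rfl⟩, ?_⟩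
    rintro g ⟨s', q1, q2, q3, q4, rfl⟩
    obtain rfl : s' = s := by omega
    rfl

lemma main_list {n : ℕ} : ∀ (m a : ℕ) (l : List ℕ), l.length = 2 * m + 3 → l.Pairwise (· < ·) →
    (∀ x ∈ l, a ≤ x ∧ x ≤ n) → a + 2 * m + 3 ≤ n →
    ((∃! g, Cp n m a l g) ↔ RR (EB n) m a l ∨ F4 n m a l)
  | 0, a, l, hl, hp, hb, hn => by
      obtain ⟨x, y, z, rfl⟩ := List.length_eq_three.1 (by simpa using hl)
      simp at hp hb
      exact base_case (by omega) (by omega) (by omega) (by omega) (by omega)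
  | m + 1, a, l, hl, hp, hb, hn => by
      rcases l with _ | ⟨f, r⟩
      · simp at hl
      have hr : r.length = 2 * m + 4 := by simp at hl; omega
      simp only [Cp_succ hr]
      have haf := (hb f (by simp)).1
      rw [List.pairwise_cons] at hp
      by_cases hst : ∃ l', r = (f + 1) :: l'
      · obtain ⟨l', rfl⟩ := hst
        have hl' : l'.length = 2 * m + 3 := by simpa using hr
        rw [List.pairwise_cons] at hp
        have hb' : ∀ x ∈ l', f + 2 ≤ x ∧ x ≤ n := by
          intro x hx
          have := hp.2.1 x hx
          have := hb x (by simp [hx])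
          omega
        have hnB : ¬ RR (GB n) m (f + 2) ((f + 1) :: l') := by
          intro h
          have := (RRG_spec _ _ _ h).2.2.1 (f + 1) (by simp)
          omega
        have hE : RR (EB n) (m + 1) a (f :: (f + 1) :: l') ↔ RR (EB n) m (f + 2) l' := by
          constructor
          · rintro ⟨i, t, q1, q2, q3⟩
            simp at q2
            obtain ⟨rfl, -, rfl⟩ := q2
            exact q3
          · intro h; exact ⟨f, l', haf, rfl, h⟩
        have h4 : F4 n (m + 1) a (f :: (f + 1) :: l') ↔
            f = a ∧ RR (GB n) m (f + 1) ((f + 1) :: l') := by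
          constructor
          · rintro ⟨t, q1, q2⟩
            simp at q1
            obtain ⟨rfl, rfl⟩ := q1
            exact ⟨rfl, q2⟩
          · rintro ⟨rfl, q⟩; exact ⟨_, rfl, q⟩
        rw [hE, h4]
        by_cases hsz : f + 2 + 2 * m + 3 ≤ n
        · have ih := main_list m (f + 2) l' hl' hp.2.2 hb' hsz
          have hex := excl (n := n) m (f + 2) l' hsz
          have hA : (∃! g, ∃ l'' g', a ≤ f ∧ (f + 1) :: l' = (f + 1) :: l'' ∧
              g = f :: (f + 1) :: g' ∧ Cp n m (f + 2) l'' g') ↔ ∃! g', Cp n m (f + 2) l' g' := by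
            constructor
            · rintro ⟨g, ⟨l'', g', -, q1, rfl, q2⟩, hu⟩
              simp at q1; subst q1
              refine ⟨g', q2, ?_⟩
              intro y hy
              have := hu (f :: (f + 1) :: y) ⟨l', y, haf, rfl, rfl, hy⟩
              simpa using this
            · rintro ⟨g', q, hu⟩
              refine ⟨_, ⟨l', g', haf, rfl, rfl, q⟩, ?_⟩
              rintro y ⟨l'', y', -, q1, rfl, q2⟩
              simp at q1; subst q1
              rw [hu y' q2]
          by_cases hC : a + 1 ≤ f ∧ F4 n m (f + 2) l'
          · have hne : f ≠ a := by omega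
            have : ¬ RR (EB n) m (f + 2) l' := fun h => hex h hC.2
            simp only [hne, false_and, or_false, this, iff_false]
            obtain ⟨g', hg', -⟩ := ih.2 (Or.inr hC.2)
            rintro ⟨g, -, hu⟩
            have e1 := hu _ (Or.inl ⟨l', g', haf, rfl, rfl, hg'⟩)
            have e2 := hu ((f - 1) :: f :: (f + 1) :: l') (Or.inr (Or.inr ⟨f - 1, by omega, by omega,
              (X_iff (by omega)).2 hC.2, rfl⟩))
            rw [← e2] at e1
            simp at e1
          · have hnC : ∀ g, ¬ ∃ e, a ≤ e ∧ f = e + 1 ∧ RR (GB n) m (f + 1) ((f + 1) :: l') ∧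
                g = e :: f :: (f + 1) :: l' := by
              rintro g ⟨e, q1, q2, q3, -⟩
              exact hC ⟨by omega, (X_iff (by omega)).1 q3⟩
            simp only [hnC, hnB, false_and, and_false, or_false]
            rw [hA, ih, X_iff (by omega)]
            by_cases hfa : f = a
            · simp [hfa]
            · have : ¬ F4 n m (f + 2) l' := fun h => hC ⟨by omega, h⟩
              simp [this]
        · have hfull := eq_range' l' (f + 2) hp.2.2 (by
            intro x hx
            have := hb' x hx
            omega)
          have hnd : l'.Nodup := hp.2.2.imp (fun h => Nat.ne_of_lt h)
          have hle : l'.toFinset ⊆ Finset.Icc (f + 2) n := by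
            intro x hx
            rw [List.mem_toFinset] at hx
            have := hb' x hx
            simp; omega
          have hc := Finset.card_le_card hle
          rw [List.toFinset_card_of_nodup hnd, Nat.card_Icc, hl'] at hc
          rw [hl'] at hfull
          have hEt : RR (EB n) m (f + 2) l' := by
            rw [hfull]; exact full_E m (f + 2) (by omega)
          have hGt : RR (GB n) m (f + 1) ((f + 1) :: l') := by
            have := full_G (n := n) m (f + 1) (by omega)
            rw [List.range'_succ, ← hfull] at this
            exact this
          simp only [hEt, true_or, iff_true]
          refine ⟨(f - 1) :: f :: (f + 1) :: l', Or.inr (Or.inr ⟨f - 1, by omega, by omega, hGt, rfl⟩), ?_⟩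
          rintro y (⟨l'', g', -, q1, q2, q3, q4⟩ | ⟨-, q, -⟩ | ⟨e, q1, q2, q3, rfl⟩)
          · have := (RRG_spec _ _ _ q3).2.2.2
            omega
          · exact (hnB q).elim
          · obtain rfl : e = f - 1 := by omega
            rfl
      · have hnA : ∀ g, ¬ ∃ l' g', a ≤ f ∧ r = (f + 1) :: l' ∧ g = f :: (f + 1) :: g' ∧
            Cp n m (f + 2) l' g' := by
          rintro g ⟨l', g', -, q, -⟩
          exact hst ⟨l', q⟩
        have hrb : ∀ x ∈ r, f + 2 ≤ x := by
          rcases r with _ | ⟨y, t⟩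
          · simp
          rw [List.pairwise_cons] at hp
          have h1 := hp.1 y (by simp)
          have h2 : y ≠ f + 1 := by rintro rfl; exact hst ⟨t, rfl⟩
          intro x hx
          rcases List.mem_cons.1 hx with rfl | hx
          · omega
          · have := hp.2.1 x hx
            omega
        have hnE : ¬ RR (EB n) (m + 1) a (f :: r) := by
          rintro ⟨i, t, q1, q2, q3⟩
          simp at q2
          obtain ⟨rfl, rfl⟩ := q2
          exact hst ⟨t, rfl⟩
        simp only [hnA, hnE, false_or]
        constructor
        · rintro ⟨g, hg, hu⟩
          have hB : RR (GB n) m (f + 2) r := by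
            rcases hg with ⟨_, q, _⟩ | ⟨e, _, _, q, _⟩
            · exact q
            · exact RRG_raise q hrb
          by_cases hfa : f = a
          · subst hfa
            exact ⟨r, rfl, RR_mono (by omega) hB⟩
          · have e1 := hu _ (Or.inl ⟨haf, hB, rfl⟩)
            have e2 := hu _ (Or.inr ⟨f - 1, by omega, by omega, RR_mono (by omega) hB, rfl⟩)
            rw [← e2] at e1
            simp at e1
        · rintro ⟨t, q1, q2⟩
          simp at q1
          obtain ⟨rfl, rfl⟩ := q1
          have hB : RR (GB n) m (f + 2) r := RRG_raise q2 hrb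
          refine ⟨_, Or.inl ⟨le_rfl, hB, rfl⟩, ?_⟩
          rintro y (⟨-, -, rfl⟩ | ⟨e, q1, q2, -⟩)
          · rfl
          · omega

lemma RR_sorted {P : ℕ → List ℕ → Prop}
    (hP : ∀ s t, P s t → t.Pairwise (· < ·) ∧ ∀ x ∈ t, s ≤ x) :
    ∀ (m a : ℕ) (l : List ℕ), RR P m a l → l.Pairwise (· < ·) ∧ ∀ x ∈ l, a ≤ x
  | 0, a, l, ⟨s, h1, h2⟩ =>
      ⟨(hP s l h2).1, fun x hx => le_trans h1 ((hP s l h2).2 x hx)⟩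
  | m + 1, a, l, ⟨i, l', h1, h2, h3⟩ => by
      obtain ⟨q2, q3⟩ := RR_sorted hP m (i + 2) l' h3
      subst h2
      constructor
      · simp only [List.pairwise_cons, List.mem_cons]
        refine ⟨?_, ?_, q2⟩
        · rintro x (rfl | hx)
          · omega
          · have := q3 x hx; omega
        · intro x hx
          have := q3 x hx; omega
      · intro x hx
        simp only [List.mem_cons] at hx
        rcases hx with rfl | rfl | hx
        · omega
        · omega
        · have := q3 x hx; omega

lemma BFacet_zero {a b : ℕ} {S : Finset ℕ} : BFacet a b 0 S ↔ S = ∅ := by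
  constructor
  · rintro ⟨i, -, -, h⟩; simpa using h
  · rintro rfl
    exact ⟨fun j => 0, fun j => j.elim0, fun j => j.elim0, by simp⟩

lemma BFacet_succ {a b m : ℕ} {S : Finset ℕ} : BFacet a b (m + 1) S ↔
    ∃ i T, a ≤ i ∧ i + 1 ≤ b ∧ BFacet (i + 2) b m T ∧ S = {i, i + 1} ∪ T := by
  constructor
  · rintro ⟨i, h1, h2, rfl⟩
    refine ⟨i 0, _, (h1 0).1, (h1 0).2, ⟨fun j => i j.succ, ?_, ?_, rfl⟩, ?_⟩
    · intro j
      have := h2 0 j.succ (Fin.succ_pos j)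
      exact ⟨by dsimp only; omega, (h1 _).2⟩
    · intro j j' h
      exact h2 _ _ (by simpa using h)
    · ext x
      simp [Fin.exists_fin_succ, or_assoc]
  · rintro ⟨i, T, h1, h2, ⟨u, h3, h4, rfl⟩, rfl⟩
    refine ⟨Fin.cons i u, ?_, ?_, ?_⟩
    · intro j
      refine Fin.cases ?_ (fun j => ?_) j
      · simp; omega
      · have := h3 j
        simp; omega
    · intro j j'
      refine Fin.cases ?_ (fun j => ?_) j <;> refine Fin.cases ?_ (fun j' => ?_) j'
      · simp
      · have := h3 j'
        simp; omega
      · simp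
      · intro h
        simpa using h4 j j' (by simpa using h)
    · ext x
      simp [Fin.exists_fin_succ, or_assoc]

lemma conv_iff {P : ℕ → List ℕ → Prop} : ∀ (m a : ℕ) (S : Finset ℕ), 1 ≤ a →
    ((∃ l, RR P m a l ∧ S = l.toFinset) ↔
      ∃ s t T, a ≤ s ∧ P s t ∧ BFacet a (s - 1) m T ∧ S = T ∪ t.toFinset)
  | 0, a, S, ha => by
      simp only [RR, BFacet_zero]
      constructor
      · rintro ⟨l, ⟨s, h1, h2⟩, rfl⟩
        exact ⟨s, l, ∅, h1, h2, rfl, by simp⟩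
      · rintro ⟨s, t, _, h1, h2, rfl, rfl⟩
        exact ⟨t, ⟨s, h1, h2⟩, by simp⟩
  | m + 1, a, S, ha => by
      simp only [RR, BFacet_succ]
      constructor
      · rintro ⟨l, ⟨i, l', h1, rfl, h3⟩, rfl⟩
        obtain ⟨s, t, T, q1, q2, q3, q4⟩ := (conv_iff m (i + 2) l'.toFinset (by omega)).1 ⟨l', h3, rfl⟩
        refine ⟨s, t, {i, i + 1} ∪ T, by omega, q2, ⟨i, T, h1, by omega, q3, rfl⟩, ?_⟩
        rw [List.toFinset_cons, List.toFinset_cons, q4]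
        ext x; simp
      · rintro ⟨s, t, _, h1, h2, ⟨i, T, q1, q2, q3, rfl⟩, rfl⟩
        obtain ⟨l', r1, r2⟩ := (conv_iff (P := P) m (i + 2) (T ∪ t.toFinset) (by omega)).2
          ⟨s, t, T, by omega, h2, q3, rfl⟩
        refine ⟨i :: (i + 1) :: l', ⟨i, l', q1, rfl, r1⟩, ?_⟩
        rw [List.toFinset_cons, List.toFinset_cons, ← r2]
        ext x; simp

lemma gamma_iff {n m : ℕ} {G : Finset ℕ} :
    GammaFacet n (m + 1) (fun t => if t.val = m then 4 else 2) G ↔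
      ∃ g, RR (GB n) m 1 g ∧ G = g.toFinset := by
  rw [conv_iff _ _ _ le_rfl]
  have hlt : ∀ j : Fin m, (j : ℕ) ≠ m := fun j => j.isLt.ne
  constructor
  · rintro ⟨st, h1, h2, rfl⟩
    have hl := h1 (Fin.last m)
    simp at hl
    refine ⟨st (Fin.last m), _, _, hl.1, ⟨by omega, rfl⟩,
      ⟨fun j => st j.castSucc, ?_, ?_, rfl⟩, ?_⟩
    · intro j
      have q1 := h1 j.castSucc
      have q2 := h2 j.castSucc (Fin.last m) (Fin.castSucc_lt_last j)
      simp [hlt] at q1 q2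
      exact ⟨q1.1, by dsimp only; omega⟩
    · intro j j' h
      have q2 := h2 j.castSucc j'.castSucc (by simpa using h)
      simp [hlt] at q2
      dsimp only
      omega
    · ext x
      simp only [Finset.mem_biUnion, Finset.mem_univ, true_and, Fin.exists_fin_succ',
        Finset.mem_union, Finset.mem_Ico, Finset.mem_insert, Finset.mem_singleton,
        List.mem_toFinset, List.mem_cons, List.not_mem_nil, Fin.val_castSucc, hlt, if_false,
        Fin.val_last, if_true, or_false]
      refine or_congr (exists_congr fun j => ?_) ?_ <;> omega
  · rintro ⟨s, t, T, h1, ⟨h2, rfl⟩, ⟨u, h3, h4, rfl⟩, rfl⟩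
    refine ⟨Fin.snoc u s, ?_, ?_, ?_⟩
    · intro j
      refine Fin.lastCases ?_ (fun j => ?_) j
      · simp; omega
      · have := h3 j
        simp [hlt]; omega
    · intro j j'
      refine Fin.lastCases ?_ (fun j => ?_) j <;> refine Fin.lastCases ?_ (fun j' => ?_) j'
      · simp
      · intro h
        exact absurd h (not_lt.2 (Fin.le_last _))
      · have := h3 j
        simp [hlt]; omega
      · intro h
        have := h4 j j' (by simpa using h)
        simp [hlt]; omega
    · ext x
      simp only [Finset.mem_biUnion, Finset.mem_univ, true_and, Fin.exists_fin_succ',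
        Finset.mem_union, Finset.mem_Ico, Finset.mem_insert, Finset.mem_singleton,
        List.mem_toFinset, List.mem_cons, List.not_mem_nil, Fin.val_castSucc, hlt, if_false,
        Fin.val_last, if_true, or_false, Fin.snoc_castSucc, Fin.snoc_last]
      refine or_congr (exists_congr fun j => ?_) ?_ <;> omega

lemma sorted_ext {l l' : List ℕ} (h : l.Pairwise (· < ·)) (h' : l'.Pairwise (· < ·))
    (he : l.toFinset = l'.toFinset) : l = l' := by
  have n1 : l.Nodup := h.imp (fun h => Nat.ne_of_lt h)
  have n2 : l'.Nodup := h'.imp (fun h => Nat.ne_of_lt h)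
  have hp : l.Perm l' := List.perm_of_nodup_nodup_toFinset_eq n1 n2 he
  exact hp.eq_of_pairwise (fun a b _ _ h1 h2 => absurd h1 (by omega)) h h'

lemma sorted_sublist {l l' : List ℕ} (h : l.Pairwise (· < ·)) (h' : l'.Pairwise (· < ·)) :
    l.toFinset ⊆ l'.toFinset ↔ l.Sublist l' := by
  constructor
  · intro hs
    have h1 : l = l'.filter (· ∈ l) := by
      apply sorted_ext h (h'.filter _)
      ext x
      have := @hs x
      simp at this ⊢
      tauto
    rw [h1]
    exact List.filter_sublist
  · intro hs x hx
    rw [List.mem_toFinset] at hx ⊢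
    exact hs.subset hx

lemma EB_sorted {n : ℕ} (s : ℕ) (t : List ℕ) (h : EB n s t) :
    t.Pairwise (· < ·) ∧ ∀ x ∈ t, s ≤ x := by
  rcases h with ⟨_, rfl⟩ | ⟨_, rfl⟩ | ⟨_, rfl⟩ <;> simp

theorem stmt_12 (k n : ℕ) (hk : 2 ≤ k) (hn : 2 * k + 2 ≤ n)
    (F : Finset ℕ) (hF : F ⊆ Finset.Icc 1 n) (hcard : F.card = 2 * k + 1) :
    (∃! G : Finset ℕ,
        GammaFacet n k (fun t => if t.val = k - 1 then 4 else 2) G ∧ F ⊆ G) ↔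
      ((∃ i : ℕ, i + 3 ≤ n ∧
          ∃ τ : Finset ℕ, BFacet 1 (i - 1) (k - 1) τ ∧ F = τ ∪ {i, i + 1, i + 3}) ∨
       (∃ i : ℕ, i + 3 ≤ n ∧
          ∃ τ : Finset ℕ, BFacet 1 (i - 1) (k - 1) τ ∧ F = τ ∪ {i, i + 2, i + 3}) ∨
       (∃ τ : Finset ℕ, BFacet 1 (n - 3) (k - 1) τ ∧ F = τ ∪ {n - 2, n - 1, n}) ∨
       (∃ i : ℕ, 2 ≤ i ∧ i ≤ n - 3 ∧
          ∃ τ : Finset ℕ, BFacet 2 (i - 1) (k - 2) τ ∧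
            F = τ ∪ {1, i, i + 1, i + 2, i + 3})) := by
  obtain ⟨m, rfl⟩ : ∃ m, k = m + 2 := ⟨k - 2, by omega⟩
  simp only [show m + 2 - 1 = m + 1 by omega, show m + 2 - 2 = m by omega]
  obtain ⟨l, hls, rfl⟩ : ∃ l : List ℕ, l.Pairwise (· < ·) ∧ l.toFinset = F :=
    ⟨F.sort (· ≤ ·), (Finset.sortedLT_sort F).pairwise, by simp⟩
  have hnd : l.Nodup := hls.imp (fun h => Nat.ne_of_lt h)
  rw [List.toFinset_card_of_nodup hnd] at hcard
  have hb : ∀ x ∈ l, 1 ≤ x ∧ x ≤ n := by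
    intro x hx
    simpa using hF (List.mem_toFinset.2 hx)
  have key := main_list (n := n) (m + 1) 1 l (by omega) hls hb (by omega)
  have hL : (∃! G : Finset ℕ,
        GammaFacet n (m + 2) (fun t => if t.val = m + 1 then 4 else 2) G ∧ l.toFinset ⊆ G) ↔
      ∃! g, Cp n (m + 1) 1 l g := by
    simp only [gamma_iff (m := m + 1)]
    constructor
    · rintro ⟨G, ⟨⟨g, h1, rfl⟩, h2⟩, hu⟩
      have hg := (RRG_spec _ _ _ h1).2.1
      refine ⟨g, ⟨h1, (sorted_sublist hls hg).1 h2⟩, ?_⟩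
      rintro y ⟨h3, h4⟩
      have hy := (RRG_spec _ _ _ h3).2.1
      exact sorted_ext hy hg (hu _ ⟨⟨y, h3, rfl⟩, (sorted_sublist hls hy).2 h4⟩)
    · rintro ⟨g, ⟨h1, h2⟩, hu⟩
      have hg := (RRG_spec _ _ _ h1).2.1
      refine ⟨g.toFinset, ⟨⟨g, h1, rfl⟩, (sorted_sublist hls hg).2 h2⟩, ?_⟩
      rintro _ ⟨⟨y, h3, rfl⟩, h4⟩
      have hy := (RRG_spec _ _ _ h3).2.1
      rw [hu y ⟨h3, (sorted_sublist hls hy).1 h4⟩]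
  have hE : RR (EB n) (m + 1) 1 l ↔ ∃ l', RR (EB n) (m + 1) 1 l' ∧ l.toFinset = l'.toFinset := by
    constructor
    · intro h; exact ⟨l, h, rfl⟩
    · rintro ⟨l', h1, h2⟩
      rwa [sorted_ext hls (RR_sorted EB_sorted _ _ _ h1).1 h2]
  have h4 : F4 n (m + 1) 1 l ↔
      ∃ t, RR (GB n) m 2 t ∧ l.toFinset = insert 1 t.toFinset := by
    constructor
    · rintro ⟨t, rfl, h⟩; exact ⟨t, h, by simp⟩
    · rintro ⟨t, h1, h2⟩
      refine ⟨t, ?_, h1⟩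
      obtain ⟨-, q2, q3, -⟩ := RRG_spec _ _ _ h1
      refine sorted_ext hls (List.pairwise_cons.2 ⟨fun x hx => ?_, q2⟩) (by simpa using h2)
      have := q3 x hx
      omega
  have h4' : F4 n (m + 1) 1 l ↔ (∃ i : ℕ, 2 ≤ i ∧ i ≤ n - 3 ∧
          ∃ τ : Finset ℕ, BFacet 2 (i - 1) m τ ∧
            l.toFinset = τ ∪ {1, i, i + 1, i + 2, i + 3}) := by
    rw [h4]
    constructor
    · rintro ⟨t, h1, h2⟩
      obtain ⟨s, t', T, q1, ⟨q2, rfl⟩, q3, q4⟩ := (conv_iff m 2 t.toFinset (by omega)).1 ⟨t, h1, rfl⟩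
      refine ⟨s, q1, by omega, T, q3, ?_⟩
      rw [h2, q4]
      ext x; simp
    · rintro ⟨i, h1, h2, T, h3, h5⟩
      obtain ⟨t, q1, q2⟩ := (conv_iff (P := GB n) m 2 (T ∪ [i, i + 1, i + 2, i + 3].toFinset)
        (by omega)).2 ⟨i, _, T, h1, ⟨by omega, rfl⟩, h3, rfl⟩
      refine ⟨t, q1, ?_⟩
      rw [h5, ← q2]
      ext x; simp
  rw [hL, key, hE, conv_iff _ _ _ le_rfl, h4', ← or_assoc, ← or_assoc]
  refine or_congr ?_ Iff.rfl
  constructor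
  · rintro ⟨s, t, T, h1, h2, h3, h4⟩
    rw [h4]
    rcases h2 with ⟨h2, rfl⟩ | ⟨h2, rfl⟩ | ⟨h2, rfl⟩
    · exact Or.inl (Or.inl ⟨s, h2, T, h3, by simp⟩)
    · exact Or.inl (Or.inr ⟨s, h2, T, h3, by simp⟩)
    · subst h2
      exact Or.inr ⟨T, h3, by simp⟩
  · have hpos : ∀ i T, BFacet 1 (i - 1) (m + 1) T → 1 ≤ i := by
      rintro i T ⟨u, h, -⟩
      have := h 0
      omega
    rintro ((⟨i, h1, T, h2, h3⟩ | ⟨i, h1, T, h2, h3⟩) | ⟨T, h2, h3⟩)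
    · exact ⟨i, [i, i + 1, i + 3], T, hpos _ _ h2, Or.inl ⟨h1, rfl⟩, h2, by simpa using h3⟩
    · exact ⟨i, [i, i + 2, i + 3], T, hpos _ _ h2, Or.inr (Or.inl ⟨h1, rfl⟩), h2,
        by simpa using h3⟩
    · obtain ⟨p, rfl⟩ : ∃ p, n = p + 2 := ⟨n - 2, by omega⟩
      exact ⟨p, [p, p + 1, p + 2], T, by omega, Or.inr (Or.inr ⟨rfl, rfl⟩), h2,
        by simpa using h3⟩
end

section
/- Let k ≥ 2 and n ≥ 2k+1. For every (2k−2)-element subset G of [n−2], the set G ∪ {n−1, n} is a facet of D(n,2k−1) if and only if G satisfies Gale's evenness condition in [n−2], i.e., for all u < v with u, v ∈ [n−2] \ G, the number of elements t ∈ G with u < t < v is even. (Equivalently, the link of {n−1,n} in D(n,2k−1) is the boundary complex ∂C(n−2, 2k−2) of the cyclic polytope.) -/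
def cntB (S : Finset ℕ) (u : ℕ) : ℕ := (S.filter fun t => t < u).card

/-- unions of `m` disjoint pairs inside `[n-3]`. -/
def GoodP (n m : ℕ) (P : Finset ℕ) : Prop :=
  P ⊆ Finset.Icc 1 (n - 3) ∧ P.card = 2 * m ∧ ∀ u, u ∉ P → Even (cntB P u)

theorem cntB_all (S : Finset ℕ) (u : ℕ) (h : ∀ t ∈ S, t < u) : cntB S u = S.card := by
  unfold cntB
  rw [Finset.filter_true_of_mem h]

theorem cntB_insert (S : Finset ℕ) (x u : ℕ) (h : x ∉ S) :
    cntB (insert x S) u = cntB S u + if x < u then 1 else 0 := by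
  unfold cntB
  rw [Finset.filter_insert]
  split_ifs with h1
  · rw [Finset.card_insert_of_notMem (by simp [h])]
  · rfl

theorem pairs_exist (m : ℕ) : ∀ P : Finset ℕ, P.card = 2 * m → (∀ u, u ∉ P → Even (cntB P u)) →
    ∃ st : ℕ → ℕ, (∀ t t', t < t' → t' < m → st t + 2 ≤ st t') ∧
      ∀ x, x ∈ P ↔ ∃ t < m, st t ≤ x ∧ x < st t + 2 := by
  induction m with
  | zero =>
    intro P hP _
    have : P = ∅ := by simpa using hP
    subst this
    exact ⟨fun _ => 0, by omega, by simp⟩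
  | succ m ih =>
    intro P hP hE
    have hne : P.Nonempty := by
      rw [← Finset.card_pos]; omega
    obtain ⟨M, hM, hmax⟩ : ∃ M ∈ P, ∀ t ∈ P, t ≤ M :=
      ⟨P.max' hne, P.max'_mem hne, fun t ht => P.le_max' t ht⟩
    have c1 : (P.erase M).card = 2 * m + 1 := by
      rw [Finset.card_erase_of_mem hM]; omega
    have hM1 : M - 1 ∈ P ∧ 1 ≤ M := by
      have h1 : 1 ≤ M := by
        by_contra h
        have : P ⊆ {M} := fun t ht => by
          have := hmax t ht
          simp; omega
        have := Finset.card_le_card this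
        simp at this; omega
      refine ⟨?_, h1⟩
      by_contra h
      have := hE _ h
      have e : cntB P (M - 1) = (P.erase M).card := by
        unfold cntB
        congr 1
        ext t
        simp only [Finset.mem_filter, Finset.mem_erase]
        constructor
        · rintro ⟨a, b⟩; exact ⟨by omega, a⟩
        · rintro ⟨a, b⟩
          have := hmax t b
          have : t ≠ M - 1 := fun h' => h (h' ▸ b)
          exact ⟨b, by omega⟩
      rw [e, c1] at this
      grind
    obtain ⟨hM1, h1⟩ := hM1
    set P1 := (P.erase M).erase (M - 1) with hP1
    have hM1' : M - 1 ∈ P.erase M := by simp [hM1]; omega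
    have c2 : P1.card = 2 * m := by
      rw [hP1, Finset.card_erase_of_mem hM1']; omega
    have e1 : insert (M - 1) P1 = P.erase M := Finset.insert_erase hM1'
    have e2 : insert M (P.erase M) = P := Finset.insert_erase hM
    have hlt : ∀ t ∈ P1, t < M - 1 := by
      intro t ht
      simp only [hP1, Finset.mem_erase] at ht
      have := hmax t ht.2.2
      omega
    have hE1 : ∀ u, u ∉ P1 → Even (cntB P1 u) := by
      intro u hu
      by_cases h : M - 1 ≤ u
      · rw [cntB_all _ _ (fun t ht => lt_of_lt_of_le (hlt t ht) h), c2]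
        simp
      · have huP : u ∉ P := by
          intro h'
          apply hu
          simp only [hP1, Finset.mem_erase]
          exact ⟨by omega, by omega, h'⟩
        have := hE u huP
        rw [← e2, cntB_insert _ _ _ (by simp), ← e1, cntB_insert _ _ _ (by simp [hP1]),
          if_neg (by omega), if_neg (by omega)] at this
        simpa using this
    obtain ⟨st, hst, hmem⟩ := ih P1 c2 hE1
    refine ⟨fun t => if t = m then M - 1 else st t, ?_, ?_⟩
    · intro t t' htt ht'
      have : t ≠ m := by omega
      simp only [this, if_false]
      split_ifs with h
      · have := hlt (st t + 1) ((hmem _).2 ⟨t, by omega, by omega, by omega⟩)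
        omega
      · exact hst t t' htt (by omega)
    · intro x
      have hx : x ∈ P ↔ x = M ∨ x = M - 1 ∨ x ∈ P1 := by
        rw [← Finset.mem_insert (s := P1), e1, ← Finset.mem_insert, e2]
      rw [hx, hmem]
      constructor
      · rintro (h | h | ⟨t, a, b, c⟩)
        · exact ⟨m, by omega, by simp; omega⟩
        · exact ⟨m, by omega, by simp; omega⟩
        · refine ⟨t, by omega, ?_⟩
          have : t ≠ m := by omega
          simp only [this, if_false]
          exact ⟨b, c⟩
      · rintro ⟨t, a, b⟩
        dsimp only at b
        split_ifs at b with h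
        · omega
        · exact Or.inr (Or.inr ⟨t, by omega, b⟩)

theorem facet_iff (n m : ℕ) (hn : 3 ≤ n) (H : Finset ℕ) :
    (GammaFacet n (m + 1) (fun t => if t.val = m + 1 - 1 then 3 else 2) H ∧ n ∈ H) ↔
      ∃ P, GoodP n m P ∧ H = P ∪ Finset.Icc (n - 2) n := by
  constructor
  · rintro ⟨⟨st, h1, h2, rfl⟩, hnH⟩
    have hl := h1 (Fin.last m)
    have hc : ∀ t : Fin m, st t.castSucc + 2 ≤ st (Fin.last m) := by
      intro t
      have := h2 t.castSucc (Fin.last m) (Fin.castSucc_lt_last t)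
      simpa [t.isLt.ne] using this
    have hc1 : ∀ t : Fin m, 1 ≤ st t.castSucc := fun t => (h1 _).1
    have hd : ∀ t t' : Fin m, t < t' → st t.castSucc + 2 ≤ st t'.castSucc := by
      intro t t' h
      have := h2 t.castSucc t'.castSucc (by simpa using h)
      simpa [t.isLt.ne] using this
    simp at hl
    have hlast : st (Fin.last m) = n - 2 := by
      simp only [Finset.mem_biUnion, Finset.mem_univ, true_and, Finset.mem_Ico] at hnH
      obtain ⟨t, ht⟩ := hnH
      induction t using Fin.lastCases with
      | last => simp at ht; omega
      | cast t =>
        have := hc t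
        simp [t.isLt.ne] at ht
        omega
    have hdisj : ∀ u, Set.PairwiseDisjoint (↑(Finset.univ : Finset (Fin m)))
        (fun t : Fin m => (Finset.Ico (st t.castSucc) (st t.castSucc + 2)).filter (· < u)) := by
      intro u t _ t' _ htt
      simp only [Function.onFun]
      rw [Finset.disjoint_left]
      intro x hx hx'
      simp only [Finset.mem_filter, Finset.mem_Ico] at hx hx'
      rcases lt_or_gt_of_ne htt with h | h
      · have := hd _ _ h; omega
      · have := hd _ _ h; omega
    refine ⟨Finset.univ.biUnion fun t : Fin m => Finset.Ico (st t.castSucc) (st t.castSucc + 2),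
      ⟨?_, ?_, ?_⟩, ?_⟩
    · intro x hx
      simp only [Finset.mem_biUnion, Finset.mem_univ, true_and, Finset.mem_Ico] at hx
      obtain ⟨t, ht⟩ := hx
      have := hc t
      have := hc1 t
      rw [Finset.mem_Icc]; omega
    · rw [Finset.card_biUnion]
      · simp [mul_comm]
      · intro t _ t' _ htt
        simp only [Function.onFun]; rw [Finset.disjoint_left]
        intro x hx hx'
        simp only [Finset.mem_Ico] at hx hx'
        rcases lt_or_gt_of_ne htt with h | h
        · have := hd _ _ h; omega
        · have := hd _ _ h; omega
    · intro u hu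
      unfold cntB
      rw [Finset.filter_biUnion, Finset.card_biUnion (fun t ht t' ht' h => hdisj u ht ht' h)]
      apply Finset.even_sum
      intro t _
      simp only [Finset.mem_biUnion, Finset.mem_univ, true_and, Finset.mem_Ico, not_exists] at hu
      have := hu t
      by_cases h : u < st t.castSucc
      · rw [Finset.filter_false_of_mem]
        · simp
        · intro x hx; rw [Finset.mem_Ico] at hx; omega
      · rw [Finset.filter_true_of_mem]
        · simp
        · intro x hx; rw [Finset.mem_Ico] at hx; omega
    · ext x
      simp only [Finset.mem_biUnion, Finset.mem_univ, true_and, Finset.mem_Ico, Finset.mem_union,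
        Finset.mem_Icc]
      constructor
      · rintro ⟨t, ht⟩
        induction t using Fin.lastCases with
        | last => simp at ht; right; omega
        | cast t =>
          simp [t.isLt.ne] at ht
          exact Or.inl ⟨t, ht⟩
      · rintro (⟨t, ht⟩ | h)
        · refine ⟨t.castSucc, ?_⟩
          simp [t.isLt.ne]; exact ht
        · refine ⟨Fin.last m, ?_⟩
          simp; omega
  · rintro ⟨P, ⟨hP, hc, hE⟩, rfl⟩
    refine ⟨?_, by simp⟩
    obtain ⟨st, hst, hmem⟩ := pairs_exist m P hc hE
    have hb : ∀ t < m, 1 ≤ st t ∧ st t + 1 ≤ n - 3 := by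
      intro t ht
      have a := hP ((hmem (st t)).2 ⟨t, ht, by omega, by omega⟩)
      have b := hP ((hmem (st t + 1)).2 ⟨t, ht, by omega, by omega⟩)
      rw [Finset.mem_Icc] at a b
      omega
    refine ⟨fun t => if t.val = m then n - 2 else st t.val, ?_, ?_, ?_⟩
    · intro t
      have := t.isLt
      by_cases h : t.val = m
      · simp [h]; omega
      · have := hb t.val (by omega)
        simp [h]; omega
    · intro t t' htt
      have := t'.isLt
      have h0 : t.val < t'.val := htt
      have h : t.val ≠ m := by omega
      have := hb t.val (by omega)
      by_cases h' : t'.val = m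
      · simp [h, h']; omega
      · simp [h, h']
        exact hst _ _ h0 (by omega)
    · ext x
      simp only [Finset.mem_biUnion, Finset.mem_univ, true_and, Finset.mem_Ico, Finset.mem_union,
        Finset.mem_Icc, hmem]
      constructor
      · rintro (⟨t, ht, h⟩ | h)
        · refine ⟨⟨t, by omega⟩, ?_⟩
          simp [ht.ne]; exact h
        · refine ⟨Fin.last m, ?_⟩
          simp; omega
      · rintro ⟨t, ht⟩
        have := t.isLt
        by_cases h : t.val = m
        · simp [h] at ht; right; omega
        · simp [h] at ht; left; exact ⟨t.val, by omega, ht⟩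

theorem step_unique (U : Finset ℕ) (hU : U.Nonempty) (a : ℕ → Prop) :
    (∃! x, x ∈ U ∧ ∀ u ∈ U, (u < x → a u) ∧ (x < u → ¬ a u)) ↔
      ∀ u ∈ U, ∀ v ∈ U, u < v → (a u ↔ a v) := by
  constructor
  · rintro ⟨x, ⟨hx, h⟩, huni⟩
    by_cases hax : a x
    · -- x is the maximum
      have hall : ∀ u ∈ U, u ≤ x := by
        by_contra! hcon
        obtain ⟨y, hy⟩ : ∃ y, y ∈ U.filter (x < ·) ∧ ∀ z ∈ U.filter (x < ·), y ≤ z := by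
          have hne : (U.filter (x < ·)).Nonempty := by
            obtain ⟨u, hu, hxu⟩ := hcon
            exact ⟨u, by simp [hu, hxu]⟩
          exact ⟨_, Finset.min'_mem _ hne, fun z hz => Finset.min'_le _ z hz⟩
        simp only [Finset.mem_filter] at hy
        have := huni y ⟨hy.1.1, fun u hu => ⟨fun huy => ?_, fun huy => (h u hu).2 (by omega)⟩⟩
        · omega
        · rcases lt_trichotomy u x with h' | h' | h'
          · exact (h u hu).1 h'
          · exact h' ▸ hax
          · have := hy.2 u ⟨hu, h'⟩; omega
      have hA : ∀ u ∈ U, a u := by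
        intro u hu
        rcases (hall u hu).lt_or_eq with h' | h'
        · exact (h u hu).1 h'
        · exact h' ▸ hax
      intro u hu v hv _
      simp [hA u hu, hA v hv]
    · have hall : ∀ u ∈ U, x ≤ u := by
        by_contra! hcon
        obtain ⟨y, hy⟩ : ∃ y, y ∈ U.filter (· < x) ∧ ∀ z ∈ U.filter (· < x), z ≤ y := by
          have hne : (U.filter (· < x)).Nonempty := by
            obtain ⟨u, hu, hxu⟩ := hcon
            exact ⟨u, by simp [hu, hxu]⟩
          exact ⟨_, Finset.max'_mem _ hne, fun z hz => Finset.le_max' _ z hz⟩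
        simp only [Finset.mem_filter] at hy
        have := huni y ⟨hy.1.1, fun u hu => ⟨fun huy => (h u hu).1 (by omega), fun huy => ?_⟩⟩
        · omega
        · rcases lt_trichotomy u x with h' | h' | h'
          · have := hy.2 u ⟨hu, h'⟩; omega
          · exact h' ▸ hax
          · exact (h u hu).2 h'
      have hA : ∀ u ∈ U, ¬ a u := by
        intro u hu
        rcases (hall u hu).lt_or_eq with h' | h'
        · exact (h u hu).2 h'
        · exact h' ▸ hax
      intro u hu v hv _
      simp [hA u hu, hA v hv]
  · intro h
    have hA : (∀ u ∈ U, a u) ∨ (∀ u ∈ U, ¬ a u) := by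
      obtain ⟨w, hw⟩ := hU
      have h' : ∀ u ∈ U, (a u ↔ a w) := by
        intro u hu
        rcases lt_trichotomy u w with h' | h' | h'
        · exact h u hu w hw h'
        · rw [h']
        · exact (h w hw u hu h').symm
      by_cases haw : a w
      · left; intro u hu; rw [h' u hu]; exact haw
      · right; intro u hu; rw [h' u hu]; exact haw
    rcases hA with hA | hA
    · refine ⟨U.max' hU, ⟨U.max'_mem hU, fun u hu => ⟨fun _ => hA u hu, fun h' => ?_⟩⟩, ?_⟩
      · have := U.le_max' u hu; omega
      · rintro y ⟨hy, hy'⟩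
        have h1 := U.le_max' y hy
        rcases h1.lt_or_eq with h2 | h2
        · exact absurd (hA _ (U.max'_mem hU)) ((hy' _ (U.max'_mem hU)).2 h2)
        · exact h2
    · refine ⟨U.min' hU, ⟨U.min'_mem hU, fun u hu => ⟨fun h' => ?_, fun _ => hA u hu⟩⟩, ?_⟩
      · have := U.min'_le u hu; omega
      · rintro y ⟨hy, hy'⟩
        have h1 := U.min'_le y hy
        rcases h1.lt_or_eq with h2 | h2
        · exact absurd ((hy' _ (U.min'_mem hU)).1 h2) (hA _ (U.min'_mem hU))
        · exact h2.symm

/-- transfer of unique existence along an injective correspondence. -/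
theorem existsUnique_transfer {α β : Type*} (p : α → Prop) (q : β → Prop) (f : β → α)
    (hpq : ∀ a, p a ↔ ∃ b, q b ∧ a = f b) (hinj : ∀ b b', q b → q b' → f b = f b' → b = b') :
    (∃! a, p a) ↔ ∃! b, q b := by
  constructor
  · rintro ⟨a, ha, hu⟩
    obtain ⟨b, hb, rfl⟩ := (hpq a).1 ha
    exact ⟨b, hb, fun b' hb' => hinj _ _ hb' hb (hu _ ((hpq _).2 ⟨b', hb', rfl⟩))⟩
  · rintro ⟨b, hb, hu⟩
    refine ⟨f b, (hpq _).2 ⟨b, hb, rfl⟩, fun a ha => ?_⟩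
    obtain ⟨b', hb', rfl⟩ := (hpq a).1 ha
    rw [hu b' hb']

theorem between_count (G : Finset ℕ) (u v : ℕ) (hu : u ∉ G) (h : u < v) :
    Even ((G.filter fun t => u < t ∧ t < v).card) ↔ (Even (cntB G u) ↔ Even (cntB G v)) := by
  have : cntB G v = cntB G u + (G.filter fun t => u < t ∧ t < v).card := by
    unfold cntB
    rw [← Finset.card_union_of_disjoint]
    · congr 1
      ext t
      simp only [Finset.mem_filter, Finset.mem_union]
      have : t ∈ G → t ≠ u := fun h h' => hu (h' ▸ h)
      grind
    · rw [Finset.disjoint_left]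
      intro t a b
      simp only [Finset.mem_filter] at a b
      omega
  rw [this, Nat.even_add]
  tauto

theorem stmt_13 (k n : ℕ) (hk : 2 ≤ k) (hn : 2 * k + 1 ≤ n)
    (G : Finset ℕ) (hG : G ⊆ Finset.Icc 1 (n - 2)) (hGcard : G.card = 2 * k - 2) :
    (∃! H : Finset ℕ,
        GammaFacet n k (fun t => if t.val = k - 1 then 3 else 2) H ∧
          G ∪ {n - 1, n} ⊆ H) ↔
      (∀ u v : ℕ, u ∈ Finset.Icc 1 (n - 2) → v ∈ Finset.Icc 1 (n - 2) →
        u ∉ G → v ∉ G → u < v →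
        Even ((G.filter fun t => u < t ∧ t < v).card)) := by
  obtain ⟨m, rfl⟩ : ∃ m, k = m + 1 := ⟨k - 1, by omega⟩
  have hc : G.card = 2 * m := by omega
  have hGm : ∀ t ∈ G, 1 ≤ t ∧ t ≤ n - 2 := fun t ht => Finset.mem_Icc.1 (hG ht)
  rw [existsUnique_transfer _ (fun P => GoodP n m P ∧ G ⊆ insert (n - 2) P)
    (fun P => P ∪ Finset.Icc (n - 2) n)]
  rotate_left
  · intro H
    constructor
    · rintro ⟨h1, h2⟩
      obtain ⟨P, hP, rfl⟩ := (facet_iff n m (by omega) H).1 ⟨h1, h2 (by simp)⟩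
      refine ⟨P, ⟨hP, fun t ht => ?_⟩, rfl⟩
      have a := h2 (Finset.mem_union_left _ ht)
      have := hGm t ht
      simp only [Finset.mem_union, Finset.mem_Icc, Finset.mem_insert] at a ⊢
      rcases a with a | a
      · exact Or.inr a
      · left; omega
    · rintro ⟨P, ⟨hP, h⟩, rfl⟩
      refine ⟨((facet_iff n m (by omega) _).2 ⟨P, hP, rfl⟩).1, fun t ht => ?_⟩
      simp only [Finset.mem_union, Finset.mem_Icc, Finset.mem_insert, Finset.mem_singleton] at ht ⊢
      rcases ht with ht | ht
      · have := h ht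
        rw [Finset.mem_insert] at this
        rcases this with h | h
        · right; omega
        · exact Or.inl h
      · right; omega
  · rintro P Q ⟨⟨hP, -⟩, -⟩ ⟨⟨hQ, -⟩, -⟩ h
    ext x
    have hx := congrArg (fun S => x ∈ S) h
    simp only [Finset.mem_union, Finset.mem_Icc, eq_iff_iff] at hx
    constructor
    · intro a
      have := Finset.mem_Icc.1 (hP a)
      rcases hx.1 (Or.inl a) with b | b
      · exact b
      · omega
    · intro a
      have := Finset.mem_Icc.1 (hQ a)
      rcases hx.2 (Or.inl a) with b | b
      · exact b
      · omega
  by_cases hmem : n - 2 ∈ G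
  · -- the case `n - 2 ∈ G`
    set G1 := G.erase (n - 2) with hG1
    have hGe : insert (n - 2) G1 = G := Finset.insert_erase hmem
    have hG1c : G1.card + 1 = 2 * m := by
      rw [hG1, Finset.card_erase_of_mem hmem]; omega
    have hG1m : ∀ t, t ∈ G1 ↔ t ≠ n - 2 ∧ t ∈ G := fun t => by rw [hG1, Finset.mem_erase]
    have hcnt : ∀ u ≤ n - 2, cntB G u = cntB G1 u := by
      intro u hu
      rw [← hGe, cntB_insert _ _ _ (by simp [hG1]), if_neg (by omega)]; rfl
    set U := Finset.Icc 1 (n - 3) \ G with hUdef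
    have hUm : ∀ t, t ∈ U ↔ (1 ≤ t ∧ t ≤ n - 3) ∧ t ∉ G := fun t => by
      rw [hUdef, Finset.mem_sdiff, Finset.mem_Icc]
    have hU : U.Nonempty := by
      by_contra hne
      rw [Finset.not_nonempty_iff_eq_empty, hUdef, Finset.sdiff_eq_empty_iff_subset] at hne
      have h1 : Finset.Icc 1 (n - 3) ⊆ G1 := fun t ht => by
        rw [hG1m]
        refine ⟨?_, hne ht⟩
        rw [Finset.mem_Icc] at ht; omega
      have := Finset.card_le_card h1
      simp at this
      omega
    rw [existsUnique_transfer _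
      (fun x => x ∈ U ∧ ∀ u ∈ U, (u < x → Even (cntB G u)) ∧ (x < u → ¬ Even (cntB G u)))
      (fun x => insert x G1)]
    · rw [step_unique U hU]
      constructor
      · intro h u v hu hv huG hvG huv
        rw [between_count G u v huG huv]
        rw [Finset.mem_Icc] at hu hv
        have : v ≠ n - 2 := fun h' => hvG (h' ▸ hmem)
        exact h u ((hUm u).2 ⟨by omega, huG⟩) v ((hUm v).2 ⟨by omega, hvG⟩) huv
      · intro h u hu v hv huv
        rw [hUm] at hu hv
        rw [← between_count G u v hu.2 huv]
        exact h u v (Finset.mem_Icc.2 (by omega)) (Finset.mem_Icc.2 (by omega)) hu.2 hv.2 huv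
    · intro P
      constructor
      · rintro ⟨⟨hP, hPc, hE⟩, hsub⟩
        have hsub1 : G1 ⊆ P := by
          intro t ht
          rw [hG1m] at ht
          have := hsub ht.2
          rw [Finset.mem_insert] at this
          tauto
        obtain ⟨x, hx, rfl⟩ := (Finset.exists_eq_insert_iff).2 ⟨hsub1, by omega⟩
        have hx1 := Finset.mem_Icc.1 (hP (Finset.mem_insert_self x G1))
        refine ⟨x, ⟨(hUm x).2 ⟨hx1, fun h => hx ((hG1m x).2 ⟨by omega, h⟩)⟩, fun u hu => ?_⟩, rfl⟩
        rw [hUm] at hu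
        rw [hcnt u (by omega)]
        by_cases hux : u = x
        · exact ⟨by omega, by omega⟩
        · have := hE u (by simp [hux, hG1m, hu.2])
          rw [cntB_insert _ _ _ hx] at this
          split_ifs at this with h'
          · exact ⟨by omega, fun _ => by grind⟩
          · exact ⟨fun _ => by simpa using this, by omega⟩
      · rintro ⟨x, ⟨hx, hxE⟩, rfl⟩
        rw [hUm] at hx
        have hxG1 : x ∉ G1 := fun h => hx.2 ((hG1m x).1 h).2
        have hcc : (insert x G1).card = 2 * m := by
          rw [Finset.card_insert_of_notMem hxG1]; omega
        have hPs : insert x G1 ⊆ Finset.Icc 1 (n - 3) := by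
          intro t ht
          rw [Finset.mem_insert, hG1m] at ht
          rw [Finset.mem_Icc]
          rcases ht with rfl | ht
          · exact hx.1
          · have := hGm t ht.2; omega
        refine ⟨⟨hPs, hcc, fun u hu => ?_⟩, ?_⟩
        · by_cases hu1 : n - 3 < u
          · rw [cntB_all, hcc]
            · simp
            · intro t ht
              have := Finset.mem_Icc.1 (hPs ht); omega
          · rw [Finset.mem_insert, hG1m] at hu
            push Not at hu
            have huG : u ∉ G := hu.2 (by omega)
            by_cases hu0 : u = 0
            · subst hu0; simp [cntB]
            have := hxE u ((hUm u).2 ⟨by omega, huG⟩)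
            rw [hcnt u (by omega)] at this
            rw [cntB_insert _ _ _ hxG1]
            rcases lt_or_gt_of_ne hu.1 with h' | h'
            · rw [if_neg (by omega)]; exact this.1 h'
            · rw [if_pos h']
              have := this.2 h'
              grind
        · intro t ht
          simp only [Finset.mem_insert, hG1m]
          tauto
    · rintro x y ⟨hx, -⟩ ⟨hy, -⟩ h
      rw [hUm] at hx hy
      have h1 : x ∈ insert y G1 := h ▸ Finset.mem_insert_self x G1
      rw [Finset.mem_insert, hG1m] at h1
      tauto
  · -- the case `n - 2 ∉ G`
    have hGs : G ⊆ Finset.Icc 1 (n - 3) := by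
      intro t ht
      have := hGm t ht
      have : t ≠ n - 2 := fun h => hmem (h ▸ ht)
      rw [Finset.mem_Icc]; omega
    have hiff : ∀ P, (GoodP n m P ∧ G ⊆ insert (n - 2) P) ↔ (P = G ∧ GoodP n m G) := by
      intro P
      constructor
      · rintro ⟨hP, h⟩
        have hs : G ⊆ P := by
          intro t ht
          have := h ht
          rw [Finset.mem_insert] at this
          rcases this with rfl | h
          · exact absurd ht hmem
          · exact h
        have := Finset.eq_of_subset_of_card_le hs (by rw [hP.2.1, hc])
        subst this
        exact ⟨rfl, hP⟩
      · rintro ⟨rfl, h⟩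
        exact ⟨h, Finset.subset_insert _ _⟩
    have hbig : ∀ u, n - 2 ≤ u → Even (cntB G u) := by
      intro u hu
      rw [cntB_all, hc]
      · simp
      · intro t ht
        have := Finset.mem_Icc.1 (hGs ht); omega
    simp only [hiff]
    constructor
    · rintro ⟨_, ⟨-, h⟩, -⟩ u v _ _ hu hv huv
      rw [between_count G u v hu huv]
      simp [h.2.2 u hu, h.2.2 v hv]
    · intro h
      refine ⟨G, ⟨rfl, hGs, hc, fun u hu => ?_⟩, fun _ h => h.1⟩
      by_cases h1 : n - 2 ≤ u
      · exact hbig u h1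
      · by_cases hu0 : u = 0
        · subst hu0; simp [cntB]
        have := h u (n - 2) (Finset.mem_Icc.2 (by omega)) (Finset.mem_Icc.2 (by omega)) hu hmem
          (by omega)
        rw [between_count G u (n - 2) hu (by omega)] at this
        exact this.2 (hbig _ le_rfl)
end

section
/- For every integer k ≥ 2 there exists a constant C > 0 such that for all n ≥ 2k+1, the transversal number of (the set of facets of) D(n,2k−1) satisfies n/2 − C ≤ T(D(n,2k−1)) ≤ n/2 + C. -/
/-- The transversal number of the set of facets of `D(n, 2k-1)`: facets are the
`2k`-element subsets of `[n]` contained in exactly one facet of `Γ^J_n`,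
where `J = (2,…,2,3)` has `k-1` entries `2` followed by one entry `3`. -/
noncomputable def DOddTransNum (n k : ℕ) : ℕ :=
  sInf {c : ℕ | ∃ S : Finset ℕ, S ⊆ Finset.Icc 1 n ∧
    (∀ F : Finset ℕ, F ⊆ Finset.Icc 1 n → F.card = 2 * k →
      (∃! G : Finset ℕ,
        GammaFacet n k (fun t => if t.val = k - 1 then 3 else 2) G ∧ F ⊆ G) →
      (S ∩ F).Nonempty) ∧ S.card = c}

lemma base_count (p : ℕ → Prop) [DecidablePred p] : ∀ m : ℕ,
    (∀ a, a + 3 ≤ m → ¬ (p a ∧ p (a + 2))) → 2 * Nat.count p m ≤ m + 4 := by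
  intro m
  induction m using Nat.strong_induction_on with
  | _ m ih =>
    intro h
    by_cases hm : m < 4
    · have := Nat.count_le (p := p) (n := m)
      omega
    · obtain ⟨r, rfl⟩ : ∃ r, m = r + 4 := ⟨m - 4, by omega⟩
      have h1 := ih r (by omega) (fun a ha => h a (by omega))
      have h2 := h r (by omega)
      have h3 := h (r + 1) (by omega)
      rw [show r + 4 = r + 1 + 1 + 1 + 1 by omega]
      simp only [Nat.count_succ]
      rw [show r + 1 + 2 = r + 1 + 1 + 1 by omega] at h3
      rw [show r + 2 = r + 1 + 1 by omega] at h2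
      split_ifs <;> first | omega | (exfalso; tauto)

lemma pair_count (p : ℕ → Prop) [DecidablePred p] : ∀ m : ℕ,
    (∀ a, a + 2 ≤ m → ¬ (p a ∧ p (a + 1))) → 2 * Nat.count p m ≤ m + 1 := by
  intro m
  induction m using Nat.strong_induction_on with
  | _ m ih =>
    intro h
    by_cases hm : m < 2
    · have := Nat.count_le (p := p) (n := m)
      omega
    · obtain ⟨r, rfl⟩ : ∃ r, m = r + 2 := ⟨m - 2, by omega⟩
      have h1 := ih r (by omega) (fun a ha => h a (by omega))
      have h2 := h r (by omega)
      rw [show r + 2 = r + 1 + 1 by omega]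
      simp only [Nat.count_succ]
      split_ifs <;> first | omega | (exfalso; tauto)

lemma find_config : ∀ (j : ℕ) (p : ℕ → Prop) [DecidablePred p] (m : ℕ),
    m + 4 + 2 * j < 2 * Nat.count p m →
    ∃ st : ℕ → ℕ, (∀ i < j, st i + 2 ≤ st (i + 1)) ∧ st j + 3 ≤ m ∧
      (∀ i < j, p (st i) ∧ p (st i + 1)) ∧ p (st j) ∧ p (st j + 2) := by
  intro j
  induction j with
  | zero =>
    intro p _ m h
    by_contra hc
    have := base_count p m (by
      intro a ha hp
      exact hc ⟨fun _ => a, by simp, ha, by simp, hp.1, hp.2⟩)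
    omega
  | succ j ih =>
    intro p _ m h
    by_cases hex : ∃ a, a + 2 ≤ m ∧ p a ∧ p (a + 1)
    · classical
      obtain ⟨b, ⟨hb1, hb2, hb3⟩, hmin⟩ :
          ∃ b, (b + 2 ≤ m ∧ p b ∧ p (b + 1)) ∧
            ∀ a < b, ¬ (a + 2 ≤ m ∧ p a ∧ p (a + 1)) :=
        ⟨Nat.find hex, Nat.find_spec hex, fun a ha => Nat.find_min hex ha⟩
      have h1 := pair_count p (b + 1) (fun a ha hp => hmin a (by omega) ⟨by omega, hp⟩)
      have h2 : Nat.count p (b + 2) ≤ Nat.count p (b + 1) + 1 := by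
        rw [show b + 2 = b + 1 + 1 by omega, Nat.count_succ p (b + 1)]
        split_ifs <;> omega
      obtain ⟨r, rfl⟩ : ∃ r, m = (b + 2) + r := ⟨m - (b + 2), by omega⟩
      rw [Nat.count_add] at h
      obtain ⟨st, s1, s2, s3, s4, s5⟩ := ih (fun i => p (b + 2 + i)) r (by omega)
      refine ⟨fun i => if i = 0 then b else b + 2 + st (i - 1), ?_, ?_, ?_, ?_, ?_⟩
      · intro i hi
        rcases i with _ | i
        · simp
        · have := s1 i (by omega)
          simp
          omega
      · simp
        omega
      · intro i hi
        rcases i with _ | i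
        · simp [hb2, hb3]
        · have := s3 i (by omega)
          simpa [add_assoc] using this
      · simpa using s4
      · simpa [add_assoc] using s5
    · have := pair_count p m (fun a ha hp => hex ⟨a, ha, hp⟩)
      omega

/-- The size vector `(2,…,2,3)`. -/
def sizeJ (k : ℕ) : Fin k → ℕ := fun t => if t.val = k - 1 then 3 else 2

lemma gamma_card (n k : ℕ) (hk : 2 ≤ k) (G : Finset ℕ)
    (h : GammaFacet n k (sizeJ k) G) : G.card = 2 * k + 1 := by
  obtain ⟨st, h1, h2, rfl⟩ := h
  rw [Finset.card_biUnion]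
  · simp only [Nat.card_Ico, Nat.add_sub_cancel_left]
    obtain ⟨r, rfl⟩ : ∃ r, k = r + 1 := ⟨k - 1, by omega⟩
    rw [Fin.sum_univ_castSucc]
    have : ∀ i : Fin r, sizeJ (r + 1) i.castSucc = 2 := by
      intro i
      have := i.2
      simp [sizeJ]
      omega
    have h3 : sizeJ (r + 1) (Fin.last r) = 3 := by simp [sizeJ]
    rw [h3, Finset.sum_congr rfl (fun i _ => this i)]
    simp
    omega
  · intro x _ y _ hxy
    rw [Function.onFun, Finset.disjoint_left]
    intro a ha hb
    rw [Finset.mem_Ico] at ha hb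
    rcases lt_or_gt_of_ne hxy with h | h
    · have := h2 _ _ h
      omega
    · have := h2 _ _ h
      omega

lemma chain_le (j : ℕ) (st : ℕ → ℕ) (h : ∀ i < j, st i + 2 ≤ st (i + 1)) :
    ∀ d i : ℕ, i + d + 1 ≤ j → st i + 2 ≤ st (i + d + 1) := by
  intro d
  induction d with
  | zero => intro i hi; exact h i (by omega)
  | succ d ih =>
    intro i hi
    have h1 := ih i (by omega)
    have h2 := h (i + d + 1) (by omega)
    rw [show i + (d + 1) + 1 = i + d + 1 + 1 by omega]
    omega

lemma lower_bound (n k : ℕ) (hk : 2 ≤ k) (S : Finset ℕ)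
    (hS : ∀ F : Finset ℕ, F ⊆ Finset.Icc 1 n → F.card = 2 * k →
      (∃! G : Finset ℕ, GammaFacet n k (sizeJ k) G ∧ F ⊆ G) → (S ∩ F).Nonempty) :
    n ≤ 2 * S.card + 2 * k + 2 := by
  by_contra hcon
  have hcount : n ≤ Nat.count (fun i => i + 1 ∉ S) n + S.card := by
    rw [Nat.count_eq_card_filter_range]
    have h1 := Finset.card_filter_add_card_filter_not (s := Finset.range n) (fun i => i + 1 ∈ S)
    have h2 : ((Finset.range n).filter (fun i => i + 1 ∈ S)).card ≤ S.card := by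
      apply Finset.card_le_card_of_injOn (fun i => i + 1)
      · intro i hi
        simp at hi
        simpa using hi.2
      · intro a _ b _ hab
        simpa using hab
    rw [Finset.card_range] at h1
    omega
  obtain ⟨st, s1, s2, s3, s4, s5⟩ :=
    find_config (k - 1) (fun i => i + 1 ∉ S) n (by omega)
  have hch : ∀ i i', i < i' → i' ≤ k - 1 → st i + 2 ≤ st i' := by
    intro i i' hlt hle
    have := chain_le (k - 1) st s1 (i' - i - 1) i (by omega)
    rwa [show i + (i' - i - 1) + 1 = i' by omega] at this
  set a := st (k - 1) + 1 with ha
  let L : Fin k := ⟨k - 1, by omega⟩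
  have hL : sizeJ k L = 3 := by simp [sizeJ, L]
  have hnL : ∀ t : Fin k, t ≠ L → t < L ∧ sizeJ k t = 2 := by
    intro t ht
    have : t.val ≠ k - 1 := fun h => ht (Fin.ext h)
    have := t.2
    refine ⟨Fin.lt_def.2 (by simp only [L]; omega), by simp [sizeJ]; omega⟩
  let G : Finset ℕ := Finset.univ.biUnion
    fun t : Fin k => Finset.Ico (st t + 1) (st t + 1 + sizeJ k t)
  have hord : ∀ t t' : Fin k, t < t' → st t + 1 + sizeJ k t ≤ st t' + 1 := by
    intro t t' htt
    have h1 := t'.2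
    have h2 : t.val < t'.val := htt
    have := hch t t' h2 (by omega)
    have h3 := (hnL t (by
      rintro rfl
      simp only [L] at h2
      omega)).2
    omega
  have hstL : st L + 1 = a := rfl
  have hend : ∀ t : Fin k, st t + 1 + sizeJ k t ≤ a + 3 := by
    intro t
    by_cases ht : t = L
    · subst ht; omega
    · have := hord t L (hnL t ht).1
      omega
  have hG : GammaFacet n k (sizeJ k) G := by
    refine ⟨fun t => st t + 1, ?_, hord, rfl⟩
    intro t
    have := hend t
    refine ⟨by simp, ?_⟩
    show st t + 1 + sizeJ k t ≤ n + 1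
    omega
  have hGcard := gamma_card n k hk G hG
  have hmG : ∀ x, x ∈ G ↔ ∃ t : Fin k, st t + 1 ≤ x ∧ x < st t + 1 + sizeJ k t := by
    intro x; simp [G]
  have haG : ∀ i < 3, a + i ∈ G := by
    intro i hi
    rw [hmG]
    exact ⟨L, by omega, by omega⟩
  have hGle : ∀ x ∈ G, 1 ≤ x ∧ x < a + 3 := by
    intro x hx
    obtain ⟨t, h1, h2⟩ := (hmG x).1 hx
    have := hend t
    omega
  have hFcard : (G.erase (a + 1)).card = 2 * k := by
    rw [Finset.card_erase_of_mem (haG 1 (by omega)), hGcard]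
    omega
  obtain ⟨x, hx⟩ := hS (G.erase (a + 1)) (by
      intro x hx
      have := hGle x (Finset.mem_of_mem_erase hx)
      rw [Finset.mem_Icc]
      omega) hFcard (by
      refine ⟨G, ⟨hG, Finset.erase_subset _ _⟩, ?_⟩
      rintro H ⟨hH, hFH⟩
      have hHcard := gamma_card n k hk H hH
      have hmem : a + 1 ∈ H := by
        obtain ⟨u, u1, u2, u3⟩ := hH
        have hmH : ∀ x, x ∈ H ↔ ∃ t : Fin k, u t ≤ x ∧ x < u t + sizeJ k t := by
          intro x; simp [u3]
        by_cases hc : u L ≤ a + 1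
        · have h2 : a + 2 ∈ H := hFH (Finset.mem_erase.2 ⟨by omega, haG 2 (by omega)⟩)
          obtain ⟨t, t1, t2⟩ := (hmH _).1 h2
          by_cases ht : t = L
          · subst ht
            exact (hmH _).2 ⟨L, by omega, by omega⟩
          · have := u2 t L (hnL t ht).1
            omega
        · exfalso
          have hsub : insert (u L + 1) (insert (u L + 2) (G.erase (a + 1))) ⊆ H := by
            intro y hy
            simp only [Finset.mem_insert] at hy
            rcases hy with rfl | rfl | hy
            · exact (hmH _).2 ⟨L, by omega, by omega⟩
            · exact (hmH _).2 ⟨L, by omega, by omega⟩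
            · exact hFH hy
          have hn2 : u L + 2 ∉ G.erase (a + 1) := by
            intro hy
            have := hGle _ (Finset.mem_of_mem_erase hy)
            omega
          have hn1 : u L + 1 ∉ insert (u L + 2) (G.erase (a + 1)) := by
            intro hy
            rcases Finset.mem_insert.1 hy with hy | hy
            · omega
            · have := hGle _ (Finset.mem_of_mem_erase hy)
              omega
          have := Finset.card_le_card hsub
          rw [Finset.card_insert_of_notMem hn1, Finset.card_insert_of_notMem hn2, hFcard] at this
          omega
      symm
      apply Finset.eq_of_subset_of_card_le
      · intro y hy
        by_cases hya : y = a + 1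
        · rw [hya]; exact hmem
        · exact hFH (Finset.mem_erase.2 ⟨hya, hy⟩)
      · omega)
  rw [Finset.mem_inter, Finset.mem_erase] at hx
  obtain ⟨hxS, hxa, hxG⟩ := hx
  obtain ⟨t, t1, t2⟩ := (hmG x).1 hxG
  by_cases ht : t = L
  · subst ht
    have : x = a ∨ x = a + 2 := by omega
    rcases this with rfl | rfl
    · exact s4 hxS
    · apply s5
      rwa [show st (k - 1) + 2 + 1 = a + 2 by omega]
  · have h3 := hnL t ht
    have h4 : t.val < k - 1 := h3.1
    have h5 := s3 t h4
    have : x = st t + 1 ∨ x = st t + 1 + 1 := by omega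
    rcases this with rfl | rfl
    · exact h5.1 hxS
    · exact h5.2 hxS

lemma upper_aux (n k : ℕ) (hk : 2 ≤ k) (F : Finset ℕ) (hF : F ⊆ Finset.Icc 1 n)
    (hc : F.card = 2 * k) (G : Finset ℕ) (hG : GammaFacet n k (sizeJ k) G) (hFG : F ⊆ G) :
    (((Finset.Icc 1 n).filter (fun i => i % 2 = 0)) ∩ F).Nonempty := by
  have hGc := gamma_card n k hk G hG
  have hsd : (G \ F).card = 1 := by
    rw [Finset.card_sdiff_of_subset hFG]; omega
  obtain ⟨z, hz⟩ := Finset.card_eq_one.1 hsd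
  have hF' : ∀ x ∈ G, x ≠ z → x ∈ F := by
    intro x hx hxz
    by_contra hxF
    have : x ∈ G \ F := Finset.mem_sdiff.2 ⟨hx, hxF⟩
    rw [hz] at this
    exact hxz (Finset.mem_singleton.1 this)
  obtain ⟨u, u1, u2, u3⟩ := hG
  have hmG : ∀ x, x ∈ G ↔ ∃ t : Fin k, u t ≤ x ∧ x < u t + sizeJ k t := by
    intro x; simp [u3]
  have hge : ∀ t : Fin k, 2 ≤ sizeJ k t := by
    intro t; simp only [sizeJ]; split_ifs <;> omega
  have key : ∀ t : Fin k, ∃ x ∈ G, x % 2 = 0 ∧ u t ≤ x ∧ x < u t + sizeJ k t := by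
    intro t
    have := hge t
    refine ⟨u t + u t % 2, (hmG _).2 ⟨t, by omega, by omega⟩, by omega, by omega, by omega⟩
  obtain ⟨x, hx, hx2, hx3, hx4⟩ := key ⟨0, by omega⟩
  obtain ⟨y, hy, hy2, hy3, hy4⟩ := key ⟨1, by omega⟩
  have hlt := u2 ⟨0, by omega⟩ ⟨1, by omega⟩ (by simp)
  have hfin : ∀ w ∈ F, w % 2 = 0 →
      (((Finset.Icc 1 n).filter (fun i => i % 2 = 0)) ∩ F).Nonempty := by
    intro w hw hw2
    exact ⟨w, Finset.mem_inter.2 ⟨Finset.mem_filter.2 ⟨hF hw, hw2⟩, hw⟩⟩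
  by_cases hxz : x = z
  · exact hfin y (hF' y hy (by omega)) hy2
  · exact hfin x (hF' x hx hxz) hx2

lemma even_card (n : ℕ) :
    2 * ((Finset.Icc 1 n).filter (fun i => i % 2 = 0)).card ≤ n := by
  have : ((Finset.Icc 1 n).filter (fun i => i % 2 = 0)).card ≤ (Finset.range (n / 2)).card := by
    apply Finset.card_le_card_of_injOn (fun i => i / 2 - 1)
    · intro i hi
      simp at hi ⊢
      omega
    · intro a ha b hb hab
      simp at ha hb hab
      omega
  rw [Finset.card_range] at this
  omega

theorem stmt_14 (k : ℕ) (hk : 2 ≤ k) :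
    ∃ C : ℝ, 0 < C ∧ ∀ n : ℕ, 2 * k + 1 ≤ n →
      (n : ℝ) / 2 - C ≤ (DOddTransNum n k : ℝ) ∧
      (DOddTransNum n k : ℝ) ≤ (n : ℝ) / 2 + C := by
  refine ⟨k + 1, by positivity, ?_⟩
  intro n _
  let A : Set ℕ := {c : ℕ | ∃ S : Finset ℕ, S ⊆ Finset.Icc 1 n ∧
    (∀ F : Finset ℕ, F ⊆ Finset.Icc 1 n → F.card = 2 * k →
      (∃! G : Finset ℕ, GammaFacet n k (sizeJ k) G ∧ F ⊆ G) →
      (S ∩ F).Nonempty) ∧ S.card = c}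
  have hA : DOddTransNum n k = sInf A := rfl
  have hmem : ((Finset.Icc 1 n).filter (fun i => i % 2 = 0)).card ∈ A := by
    refine ⟨_, Finset.filter_subset _ _, ?_, rfl⟩
    rintro F hF hc ⟨G, ⟨hG, hFG⟩, _⟩
    exact upper_aux n k hk F hF hc G hG hFG
  have hup : 2 * DOddTransNum n k ≤ n := by
    have h1 := Nat.sInf_le hmem
    have h2 := even_card n
    omega
  have hlow : n ≤ 2 * DOddTransNum n k + 2 * k + 2 := by
    obtain ⟨S, _, hS, hSc⟩ := Nat.sInf_mem (s := A) ⟨_, hmem⟩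
    have := lower_bound n k hk S hS
    omega
  have hup' : (2 : ℝ) * DOddTransNum n k ≤ n := by exact_mod_cast hup
  have hlow' : (n : ℝ) ≤ 2 * DOddTransNum n k + 2 * k + 2 := by exact_mod_cast hlow
  have hk0 : (0 : ℝ) ≤ k := Nat.cast_nonneg k
  constructor <;> linarith
end

section
/- For every integer k ≥ 2 there exists a constant C > 0 such that for all n ≥ 2k+2, the transversal number of (the set of facets of) D(n,2k) satisfies 2n/5 − C ≤ T(D(n,2k)) ≤ 2n/5 + C. -/
/-- The transversal number of the set of facets of `D(n, 2k)`: facets are the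
`(2k+1)`-element subsets of `[n]` contained in exactly one facet of `Γ^J_n`,
where `J = (2,…,2,4)` has `k-1` entries `2` followed by one entry `4`. -/
noncomputable def DEvenTransNum (n k : ℕ) : ℕ :=
  sInf {c : ℕ | ∃ S : Finset ℕ, S ⊆ Finset.Icc 1 n ∧
    (∀ F : Finset ℕ, F ⊆ Finset.Icc 1 n → F.card = 2 * k + 1 →
      (∃! G : Finset ℕ,
        GammaFacet n k (fun t => if t.val = k - 1 then 4 else 2) G ∧ F ⊆ G) →
      (S ∩ F).Nonempty) ∧ S.card = c}

theorem gamma_card_s15 (n m : ℕ) (J : Fin m → ℕ) (G : Finset ℕ) (h : GammaFacet n m J G) :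
    G.card = ∑ t, J t := by
  obtain ⟨st, h1, h2, rfl⟩ := h
  rw [Finset.card_biUnion]
  · simp
  · intro t _ t' _ htt
    rw [Function.onFun, Finset.disjoint_left]
    intro x hx hx'
    rw [Finset.mem_Ico] at hx hx'
    rcases lt_or_gt_of_ne htt with h | h
    · have := h2 _ _ h; omega
    · have := h2 _ _ h; omega

theorem sum_J (k : ℕ) (hk : 2 ≤ k) :
    ∑ t : Fin k, (if t.val = k - 1 then 4 else 2) = 2 * k + 2 := by
  obtain ⟨m, rfl⟩ : ∃ m, k = m + 1 := ⟨k - 1, by omega⟩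
  rw [Fin.sum_univ_castSucc]
  have : ∀ i : Fin m, (if (i.castSucc).val = m + 1 - 1 then 4 else 2) = 2 := by
    intro i
    have := i.isLt
    rw [if_neg]
    simp
    omega
  simp only [this]
  simp
  omega

/-- Structure of a facet of `Γ`: it contains a final block of four integers. -/
theorem gamma_last (n k : ℕ) (hk : 2 ≤ k) (G : Finset ℕ)
    (h : GammaFacet n k (fun t => if t.val = k - 1 then 4 else 2) G) :
    ∃ q, q + 4 ≤ n + 1 ∧ (∀ x, q ≤ x → x < q + 4 → x ∈ G) ∧ (∀ x ∈ G, x < q + 4) := by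
  obtain ⟨st, h1, h2, rfl⟩ := h
  let l : Fin k := ⟨k - 1, by omega⟩
  have hl := h1 l
  simp only [l, if_true] at hl
  refine ⟨st l, hl.2, ?_, ?_⟩
  · intro x hx hx'
    rw [Finset.mem_biUnion]
    exact ⟨l, Finset.mem_univ _, by simp [l]; exact ⟨hx, hx'⟩⟩
  · intro x hx
    rw [Finset.mem_biUnion] at hx
    obtain ⟨t, _, ht⟩ := hx
    rw [Finset.mem_Ico] at ht
    by_cases htl : t = l
    · subst htl
      simpa [l] using ht.2
    · have hlt : t < l := by
        rw [Fin.lt_def]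
        have : t.val ≠ l.val := fun h => htl (Fin.ext h)
        have := t.isLt
        simp only [l] at *
        omega
      have := h2 t l hlt
      omega

/-- Shifting the last block. -/
theorem gamma_shift (n k : ℕ) (hk : 2 ≤ k) (G : Finset ℕ)
    (h : GammaFacet n k (fun t => if t.val = k - 1 then 4 else 2) G) :
    ∃ q, 1 ≤ q ∧ q + 4 ≤ n + 1 ∧ (∀ x, q ≤ x → x < q + 4 → x ∈ G) ∧ (∀ x ∈ G, x < q + 4) ∧
      (∀ q', 1 ≤ q' → q' + 4 ≤ n + 1 → (∀ x ∈ G, x < q → x < q') →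
        ∃ G', GammaFacet n k (fun t => if t.val = k - 1 then 4 else 2) G' ∧
          (∀ x ∈ G, x < q → x ∈ G') ∧ (∀ x, q' ≤ x → x < q' + 4 → x ∈ G') ∧
          (∀ x ∈ G', x < q' + 4)) := by
  have hG := h
  obtain ⟨st, h1, h2, rfl⟩ := h
  let l : Fin k := ⟨k - 1, by omega⟩
  have hl := h1 l
  simp only [l, if_true] at hl
  have hlt : ∀ t : Fin k, t ≠ l → t < l := by
    intro t htl
    rw [Fin.lt_def]
    have : t.val ≠ l.val := fun h => htl (Fin.ext h)
    have := t.isLt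
    simp only [l] at *
    omega
  have hnl : ∀ t : Fin k, t ≠ l → t.val ≠ k - 1 := by
    intro t htl h
    exact htl (Fin.ext h)
  have hmax : ∀ x ∈ Finset.univ.biUnion (fun t : Fin k =>
      Finset.Ico (st t) (st t + if t.val = k - 1 then 4 else 2)), x < st l + 4 := by
    intro x hx
    rw [Finset.mem_biUnion] at hx
    obtain ⟨t, _, ht⟩ := hx
    rw [Finset.mem_Ico] at ht
    by_cases htl : t = l
    · subst htl
      simpa [l] using ht.2
    · have := h2 t l (hlt t htl)
      simp only at this
      omega
  refine ⟨st l, hl.1, hl.2, ?_, hmax, ?_⟩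
  · intro x hx hx'
    rw [Finset.mem_biUnion]
    exact ⟨l, Finset.mem_univ _, by simp [l]; exact ⟨hx, hx'⟩⟩
  · intro q' hq1 hq2 hq3
    have hpair : ∀ t : Fin k, t ≠ l → st t + 2 ≤ q' := by
      intro t ht
      have a1 := h2 t l (hlt t ht)
      simp only [hnl t ht, if_false] at a1
      have := hq3 (st t + 1) (by
        rw [Finset.mem_biUnion]
        exact ⟨t, Finset.mem_univ _, by simp [hnl t ht]⟩) (by omega)
      omega
    have hG' : GammaFacet n k (fun t => if t.val = k - 1 then 4 else 2)
        (Finset.univ.biUnion (fun t : Fin k =>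
          Finset.Ico (if t = l then q' else st t)
            ((if t = l then q' else st t) + if t.val = k - 1 then 4 else 2))) := by
      refine ⟨fun t => if t = l then q' else st t, ?_, ?_, rfl⟩
      · intro t
        by_cases ht : t = l
        · subst ht; simp [l]; omega
        · simp only [ht, if_false]; exact h1 t
      · intro t t' htt
        have ht : t ≠ l := by
          rintro rfl
          have := t'.isLt
          rw [Fin.lt_def] at htt
          simp only [l] at htt
          omega
        by_cases ht' : t' = l
        · simp only [ht, ht', if_false, if_true, hnl t ht]
          exact hpair t ht
        · simp only [ht, ht', if_false]
          exact h2 t t' htt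
    refine ⟨_, hG', ?_, ?_, ?_⟩
    · intro x hx hxl
      rw [Finset.mem_biUnion] at hx ⊢
      obtain ⟨t, _, ht⟩ := hx
      have htl : t ≠ l := by
        rintro rfl
        rw [Finset.mem_Ico] at ht
        omega
      exact ⟨t, Finset.mem_univ _, by simpa only [htl, if_false] using ht⟩
    · intro x hx hx'
      rw [Finset.mem_biUnion]
      exact ⟨l, Finset.mem_univ _, by simp [l]; exact ⟨hx, hx'⟩⟩
    · intro x hx
      rw [Finset.mem_biUnion] at hx
      obtain ⟨t, _, ht⟩ := hx
      rw [Finset.mem_Ico] at ht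
      by_cases htl : t = l
      · subst htl
        simpa [l] using ht.2
      · have := hpair t htl
        simp only [htl, if_false, hnl t htl] at ht
        omega

theorem two_out {F G : Finset ℕ} (hFG : F ⊆ G) (hc : G.card ≤ F.card + 1) {x y : ℕ}
    (hx : x ∈ G) (hy : y ∈ G) (hxF : x ∉ F) (hyF : y ∉ F) : x = y := by
  have h1 : (G \ F).card ≤ 1 := by
    rw [Finset.card_sdiff_of_subset hFG]; omega
  exact Finset.card_le_one.mp h1 x (by simp [hx, hxF]) y (by simp [hy, hyF])

/-- The periodic transversal. -/
theorem upper_trans (n k : ℕ) (hk : 2 ≤ k) (S : Finset ℕ) (hn : 1 ≤ n)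
    (hS : S = insert 1 (insert n ((Finset.Icc 1 n).filter fun x => x % 5 = 3 ∨ x % 5 = 4)))
    (F : Finset ℕ) (hF : F ⊆ Finset.Icc 1 n) (hc : F.card = 2 * k + 1)
    (hu : ∃! G : Finset ℕ,
        GammaFacet n k (fun t => if t.val = k - 1 then 4 else 2) G ∧ F ⊆ G) :
    (S ∩ F).Nonempty := by
  by_contra hne
  rw [Finset.not_nonempty_iff_eq_empty] at hne
  have hdis : ∀ x ∈ F, x ∉ S := by
    intro x hx hxS
    have : x ∈ S ∩ F := Finset.mem_inter.mpr ⟨hxS, hx⟩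
    rw [hne] at this
    simp at this
  have hmod : ∀ x ∈ F, 1 < x ∧ x < n ∧ x % 5 ≠ 3 ∧ x % 5 ≠ 4 := by
    intro x hx
    have h1 := hdis x hx
    have h2 := Finset.mem_Icc.mp (hF hx)
    rw [hS] at h1
    simp only [Finset.mem_insert, Finset.mem_filter, Finset.mem_Icc] at h1
    omega
  obtain ⟨G, ⟨hG, hFG⟩, huniq⟩ := hu
  have hGc := gamma_card_s15 _ _ _ _ hG
  rw [sum_J k hk] at hGc
  obtain ⟨q, hq1, hqn, hqG, hqmax, hshift⟩ := gamma_shift n k hk G hG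
  have hout : ∀ x y, x ∈ G → y ∈ G → x ∉ F → y ∉ F → x = y := fun x y hx hy hxF hyF =>
    two_out hFG (by omega) hx hy hxF hyF
  have g0 := hqG q (by omega) (by omega)
  have g1 := hqG (q+1) (by omega) (by omega)
  have g2 := hqG (q+2) (by omega) (by omega)
  have g3 := hqG (q+3) (by omega) (by omega)
  by_cases f0 : q ∈ F
  · by_cases f3 : q + 3 ∈ F
    · have a0 := hmod _ f0
      have a3 := hmod _ f3
      have : q + 1 ∉ F := fun h => by have := hmod _ h; omega
      have : q + 2 ∉ F := fun h => by have := hmod _ h; omega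
      have := hout (q+1) (q+2) g1 g2 ‹_› ‹_›
      omega
    · have f1 : q + 1 ∈ F := by
        by_contra h
        have := hout _ _ g1 g3 h f3
        omega
      have f2 : q + 2 ∈ F := by
        by_contra h
        have := hout _ _ g2 g3 h f3
        omega
      have a0 := hmod _ f0
      have a1 := hmod _ f1
      have a2 := hmod _ f2
      have hm1 : q - 1 ∉ F := fun h => by have := hmod _ h; omega
      obtain ⟨G', hG', k1, k2, k3⟩ := hshift (q - 1) (by omega) (by omega) (by
        intro x hx hxq
        by_contra hcon
        have : x = q - 1 := by omega
        subst this
        have := hout _ _ hx g3 hm1 f3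
        omega)
      have := huniq G' ⟨hG', by
        intro x hx
        have b := hqmax x (hFG hx)
        have : x ≠ q + 3 := by rintro rfl; exact f3 hx
        by_cases hxq : x < q
        · exact k1 x (hFG hx) hxq
        · exact k2 x (by omega) (by omega)⟩
      subst this
      have := k3 _ g3
      omega
  · have f1 : q + 1 ∈ F := by
      by_contra h
      have := hout _ _ g1 g0 h f0
      omega
    have f2 : q + 2 ∈ F := by
      by_contra h
      have := hout _ _ g2 g0 h f0
      omega
    have f3 : q + 3 ∈ F := by
      by_contra h
      have := hout _ _ g3 g0 h f0
      omega
    have a1 := hmod _ f1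
    have a2 := hmod _ f2
    have a3 := hmod _ f3
    obtain ⟨G', hG', k1, k2, k3⟩ := hshift (q + 1) (by omega) (by omega) (by
      intro x hx hxq
      omega)
    have := huniq G' ⟨hG', by
      intro x hx
      have b := hqmax x (hFG hx)
      have : x ≠ q := by rintro rfl; exact f0 hx
      by_cases hxq : x < q
      · exact k1 x (hFG hx) hxq
      · exact k2 x (by omega) (by omega)⟩
    subst this
    have := hqmax (q + 4) (k2 _ (by omega) (by omega))
    omega

theorem card_mod (n : ℕ) :
    5 * ((Finset.Icc 1 n).filter fun x => x % 5 = 3 ∨ x % 5 = 4).card ≤ 2 * n + 10 := by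
  have key : ((Finset.Icc 1 n).filter fun x => x % 5 = 3 ∨ x % 5 = 4).card
      = 2 * (n / 5) + (n % 5 - 2) := by
    induction n with
    | zero => simp
    | succ n ih =>
      rw [← Finset.insert_Icc_right_eq_Icc_add_one (by omega), Finset.filter_insert]
      split_ifs with h
      · rw [Finset.card_insert_of_notMem (by simp), ih]
        omega
      · rw [ih]; omega
  rw [key]
  omega

/-- A sufficiently sparse block contains a pair and a pattern. -/
theorem block_pattern (S : Finset ℕ) (i : ℕ)
    (h : (S.filter fun x => (x - 1) / 5 = i ∧ 1 ≤ x).card ≤ 1) :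
    (∃ p, 5 * i + 1 ≤ p ∧ p + 1 ≤ 5 * i + 5 ∧ p ∉ S ∧ p + 1 ∉ S) ∧
    (∃ a y, 5 * i + 1 ≤ a ∧ a + 3 ≤ 5 * i + 5 ∧ (y = a + 1 ∨ y = a + 2) ∧
      ∀ x, a ≤ x → x < a + 4 → x ≠ y → x ∉ S) := by
  rw [Finset.card_le_one] at h
  have hh : ∀ x y, x ∈ S → y ∈ S → 5 * i + 1 ≤ x → x ≤ 5 * i + 5 → 5 * i + 1 ≤ y →
      y ≤ 5 * i + 5 → x = y := by
    intro x y hx hy _ _ _ _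
    apply h
    · simp only [Finset.mem_filter]; exact ⟨hx, by omega, by omega⟩
    · simp only [Finset.mem_filter]; exact ⟨hy, by omega, by omega⟩
  have key : ∃ s, 5 * i + 1 ≤ s ∧ s ≤ 5 * i + 5 ∧
      ∀ x, 5 * i + 1 ≤ x → x ≤ 5 * i + 5 → x ≠ s → x ∉ S := by
    by_cases he : ∃ s, s ∈ S ∧ 5 * i + 1 ≤ s ∧ s ≤ 5 * i + 5
    · obtain ⟨s, hs, h1, h2⟩ := he
      exact ⟨s, h1, h2, fun x hx1 hx2 hne hx => hne (hh x s hx hs hx1 hx2 h1 h2)⟩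
    · push Not at he
      exact ⟨5 * i + 1, by omega, by omega, fun x hx1 hx2 hne hx => by
        have := he x hx hx1; omega⟩
  obtain ⟨s, h1, h2, h3⟩ := key
  constructor
  · by_cases hs : s ≤ 5 * i + 2
    · exact ⟨5 * i + 4, by omega, by omega, h3 _ (by omega) (by omega) (by omega),
        h3 _ (by omega) (by omega) (by omega)⟩
    · exact ⟨5 * i + 1, by omega, by omega, h3 _ (by omega) (by omega) (by omega),
        h3 _ (by omega) (by omega) (by omega)⟩
  · by_cases hs1 : s = 5 * i + 1
    · exact ⟨5 * i + 2, 5 * i + 3, by omega, by omega, by omega,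
        fun x _ _ _ => h3 x (by omega) (by omega) (by omega)⟩
    by_cases hs4 : s = 5 * i + 4
    · exact ⟨5 * i + 2, 5 * i + 4, by omega, by omega, by omega,
        fun x _ _ _ => h3 x (by omega) (by omega) (by omega)⟩
    by_cases hs2 : s = 5 * i + 2
    · exact ⟨5 * i + 1, 5 * i + 2, by omega, by omega, by omega,
        fun x _ _ _ => h3 x (by omega) (by omega) (by omega)⟩
    · exact ⟨5 * i + 1, 5 * i + 3, by omega, by omega, by omega,
        fun x _ _ _ => h3 x (by omega) (by omega) (by omega)⟩

/-- Removing an interior point of the last block gives a facet of `D`. -/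
theorem unique_completion (n k : ℕ) (hk : 2 ≤ k) (G : Finset ℕ) (a y : ℕ)
    (hG : GammaFacet n k (fun t => if t.val = k - 1 then 4 else 2) G)
    (haG : ∀ x, a ≤ x → x < a + 4 → x ∈ G) (hmax : ∀ x ∈ G, x < a + 4)
    (hy : y = a + 1 ∨ y = a + 2) :
    ∃! G' : Finset ℕ,
      GammaFacet n k (fun t => if t.val = k - 1 then 4 else 2) G' ∧ G.erase y ⊆ G' := by
  have hGc := gamma_card_s15 _ _ _ _ hG
  rw [sum_J k hk] at hGc
  have hyG : y ∈ G := haG y (by omega) (by omega)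
  refine ⟨G, ⟨hG, Finset.erase_subset _ _⟩, ?_⟩
  rintro G' ⟨hG', hsub⟩
  have hGc' := gamma_card_s15 _ _ _ _ hG'
  rw [sum_J k hk] at hGc'
  have hec : (G.erase y).card = 2 * k + 1 := by
    rw [Finset.card_erase_of_mem hyG, hGc]; rfl
  obtain ⟨q, -, hq, hqm⟩ := gamma_last n k hk G' hG'
  have hyG' : y ∈ G' := by
    by_cases hqa : q ≤ a
    · have h3 : a + 3 ∈ G' := hsub (Finset.mem_erase.mpr ⟨by omega, haG _ (by omega) (by omega)⟩)
      have := hqm _ h3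
      exact hq y (by omega) (by omega)
    · exfalso
      have hbig : ∀ x, a + 4 ≤ x → x ∉ G.erase y := by
        intro x hx h
        have := hmax x (Finset.mem_of_mem_erase h)
        omega
      have hout : ∀ x, q ≤ x → x < q + 3 → x ∈ G.erase y := by
        intro x h1 h2
        by_contra h
        have := two_out hsub (by omega) (hq x h1 (by omega)) (hq (q+3) (by omega) (by omega))
          h (hbig _ (by omega))
        omega
      have h2 := hout (q+2) (by omega) (by omega)
      have : q + 2 < a + 4 := by
        by_contra h
        exact hbig _ (by omega) h2
      have hyy := hout y (by omega) (by omega)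
      simp at hyy
  symm
  apply Finset.eq_of_subset_of_card_le
  · intro x hx
    by_cases hxy : x = y
    · subst hxy; exact hyG'
    · exact hsub (Finset.mem_erase.mpr ⟨hxy, hx⟩)
  · omega

theorem lower_trans (n k : ℕ) (hk : 2 ≤ k) (S : Finset ℕ)
    (hS : ∀ F : Finset ℕ, F ⊆ Finset.Icc 1 n → F.card = 2 * k + 1 →
      (∃! G : Finset ℕ,
        GammaFacet n k (fun t => if t.val = k - 1 then 4 else 2) G ∧ F ⊆ G) →
      (S ∩ F).Nonempty) : 2 * (n / 5) ≤ S.card + 2 * k := by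
  classical
  set fib : ℕ → Finset ℕ := fun i => S.filter fun x => (x - 1) / 5 = i ∧ 1 ≤ x with hfib
  set B := (Finset.range (n / 5)).filter fun i => (fib i).card ≤ 1 with hB
  have hBk : B.card < k := by
    by_contra hcon
    push Not at hcon
    let e := B.orderEmbOfCardLe hcon
    have he : ∀ t, e t ∈ B := fun t => Finset.orderEmbOfCardLe_mem B hcon t
    have hlt : ∀ t t', t < t' → e t < e t' := fun t t' h => e.strictMono h
    have he1 : ∀ t, e t < n / 5 := fun t => by
      have := he t
      rw [hB, Finset.mem_filter, Finset.mem_range] at this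
      exact this.1
    have hbp : ∀ t, _ := fun t => block_pattern S (e t) (by
      have := he t
      rw [hB, Finset.mem_filter] at this
      exact this.2)
    choose p hp1 hp2 hp3 hp4 using fun t => (hbp t).1
    choose a y ha1 ha2 ha3 ha4 using fun t => (hbp t).2
    let l : Fin k := ⟨k - 1, by omega⟩
    let st : Fin k → ℕ := fun t => if t.val = k - 1 then a t else p t
    have hst : ∀ t, 5 * e t + 1 ≤ st t ∧
        st t + (if t.val = k - 1 then 4 else 2) ≤ 5 * e t + 6 := by
      intro t
      have := hp1 t; have := hp2 t; have := ha1 t; have := ha2 t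
      simp only [st]
      split_ifs <;> omega
    set G : Finset ℕ := Finset.univ.biUnion fun t : Fin k =>
      Finset.Ico (st t) (st t + if t.val = k - 1 then 4 else 2) with hGdef
    have hG : GammaFacet n k (fun t => if t.val = k - 1 then 4 else 2) G := by
      refine ⟨st, ?_, ?_, rfl⟩
      · intro t
        have := hst t
        have := he1 t
        constructor
        · omega
        · simp only; omega
      · intro t t' h
        have := hst t
        have := hst t'
        have := hlt t t' h
        simp only
        omega
    have hstl : st l = a l := by simp [st, l]
    have haG : ∀ x, a l ≤ x → x < a l + 4 → x ∈ G := by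
      intro x h1 h2
      rw [hGdef, Finset.mem_biUnion]
      refine ⟨l, Finset.mem_univ _, ?_⟩
      rw [Finset.mem_Ico, hstl]
      simp only [l, if_true]
      exact ⟨h1, h2⟩
    have hGx : ∀ x ∈ G, (a l ≤ x ∧ x < a l + 4) ∨ (x < a l ∧ x ∉ S) := by
      intro x hx
      rw [hGdef, Finset.mem_biUnion] at hx
      obtain ⟨t, _, ht⟩ := hx
      rw [Finset.mem_Ico] at ht
      by_cases htl : t.val = k - 1
      · left
        have : t = l := Fin.ext htl
        subst this
        rw [hstl] at ht
        simpa [l] using ht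
      · right
        have htlt : t < l := by
          rw [Fin.lt_def]
          have := t.isLt
          simp only [l]
          omega
        have b1 := hlt t l htlt
        have b2 := hst t
        have b3 := ha1 l
        refine ⟨by omega, ?_⟩
        simp only [st, htl, if_false] at ht
        rcases (show x = p t ∨ x = p t + 1 by omega) with rfl | rfl
        · exact hp3 t
        · exact hp4 t
    have hmax : ∀ x ∈ G, x < a l + 4 := by
      intro x hx
      have := hGx x hx
      omega
    have hGc := gamma_card_s15 _ _ _ _ hG
    rw [sum_J k hk] at hGc
    have hyG : y l ∈ G := by
      have := ha3 l
      exact haG _ (by omega) (by omega)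
    have hne := hS (G.erase (y l)) (by
      intro x hx
      have hx := Finset.mem_of_mem_erase hx
      rw [hGdef, Finset.mem_biUnion] at hx
      obtain ⟨t, _, ht⟩ := hx
      rw [Finset.mem_Ico] at ht
      have := hst t
      have := he1 t
      rw [Finset.mem_Icc]
      omega) (by rw [Finset.card_erase_of_mem hyG, hGc]; rfl)
      (unique_completion n k hk G (a l) (y l) hG haG hmax (ha3 l))
    obtain ⟨x, hx⟩ := hne
    rw [Finset.mem_inter, Finset.mem_erase] at hx
    obtain ⟨hxS, hxy, hxG⟩ := hx
    rcases hGx x hxG with h | h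
    · exact ha4 l x h.1 h.2 hxy hxS
    · exact h.2 hxS
  have hsum : ((Finset.range (n / 5) \ B).biUnion fib).card ≤ S.card := by
    apply Finset.card_le_card
    intro x hx
    rw [Finset.mem_biUnion] at hx
    obtain ⟨i, _, hi⟩ := hx
    exact (Finset.mem_filter.mp hi).1
  rw [Finset.card_biUnion] at hsum
  · have h2 : (Finset.range (n / 5) \ B).card • 2 ≤
        ∑ i ∈ Finset.range (n / 5) \ B, (fib i).card := by
      apply Finset.card_nsmul_le_sum
      intro i hi
      rw [Finset.mem_sdiff, hB, Finset.mem_filter] at hi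
      by_contra h
      exact hi.2 ⟨hi.1, by omega⟩
    rw [Finset.card_sdiff_of_subset (Finset.filter_subset _ _), Finset.card_range,
      smul_eq_mul, ← hB] at h2
    omega
  · intro i _ j _ hij
    rw [Function.onFun, Finset.disjoint_left]
    intro x hx hx'
    rw [hfib] at hx hx'
    simp only [Finset.mem_filter] at hx hx'
    exact hij (hx.2.1.symm.trans hx'.2.1)

theorem stmt_15 (k : ℕ) (hk : 2 ≤ k) :
    ∃ C : ℝ, 0 < C ∧ ∀ n : ℕ, 2 * k + 2 ≤ n →
      2 * (n : ℝ) / 5 - C ≤ (DEvenTransNum n k : ℝ) ∧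
      (DEvenTransNum n k : ℝ) ≤ 2 * (n : ℝ) / 5 + C := by
  refine ⟨2 * k + 4, by positivity, ?_⟩
  intro n hn
  set S : Finset ℕ :=
    insert 1 (insert n ((Finset.Icc 1 n).filter fun x => x % 5 = 3 ∨ x % 5 = 4)) with hS
  have hSsub : S ⊆ Finset.Icc 1 n := by
    intro x hx
    rw [hS] at hx
    simp only [Finset.mem_insert, Finset.mem_filter, Finset.mem_Icc] at hx ⊢
    omega
  have hScard : 5 * S.card ≤ 2 * n + 20 := by
    have h1 := card_mod n
    have h2 := Finset.card_insert_le n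
      ((Finset.Icc 1 n).filter fun x => x % 5 = 3 ∨ x % 5 = 4)
    have h3 := Finset.card_insert_le 1
      (insert n ((Finset.Icc 1 n).filter fun x => x % 5 = 3 ∨ x % 5 = 4))
    rw [← hS] at h3
    omega
  have hmem : S.card ∈ {c : ℕ | ∃ S : Finset ℕ, S ⊆ Finset.Icc 1 n ∧
    (∀ F : Finset ℕ, F ⊆ Finset.Icc 1 n → F.card = 2 * k + 1 →
      (∃! G : Finset ℕ,
        GammaFacet n k (fun t => if t.val = k - 1 then 4 else 2) G ∧ F ⊆ G) →
      (S ∩ F).Nonempty) ∧ S.card = c} :=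
    ⟨S, hSsub, fun F hF hc hu => upper_trans n k hk S (by omega) hS F hF hc hu, rfl⟩
  have hup : DEvenTransNum n k ≤ S.card := Nat.sInf_le hmem
  obtain ⟨S', -, hS', hc'⟩ := Nat.sInf_mem ⟨_, hmem⟩
  have hlow := lower_trans n k hk S' hS'
  have hc'' : S'.card = DEvenTransNum n k := hc'
  rw [hc''] at hlow
  have hlow' : 2 * n ≤ 5 * DEvenTransNum n k + 10 * k + 20 := by omega
  have hup' : 5 * DEvenTransNum n k ≤ 2 * n + 20 := by omega
  have r1 : (2 * n : ℝ) ≤ 5 * DEvenTransNum n k + 10 * k + 20 := by exact_mod_cast hlow'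
  have r2 : (5 * DEvenTransNum n k : ℝ) ≤ 2 * n + 20 := by exact_mod_cast hup'
  have hk0 : (0 : ℝ) ≤ k := Nat.cast_nonneg k
  constructor <;> linarith
end

section
/- Fix an integer k ≥ 2. For each n ≥ 1, let Δ'_n be the family of 2k-element subsets of [(4k−1)n] consisting of: (i) all facets of B([1, (4k−1)n], 2k−1) that are not contained in any interval {(4k−1)m+1, …, (4k−1)m+4k−1} with 0 ≤ m ≤ n−1; and (ii) the sets {(4k−1)m+1, (4k−1)m+3, …, (4k−1)m+4k−1} for all 0 ≤ m ≤ n−1. Then lim_{n→∞} T(Δ'_n)/((4k−1)n) = 2k/(4k−1). -/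
/-- The family `Δ'_n`: facets of `B([1,(4k-1)n], 2k-1)` not contained in any interval
`{(4k-1)m+1, …, (4k-1)m+4k-1}` with `m < n`, together with the sets
`{(4k-1)m+1, (4k-1)m+3, …, (4k-1)m+4k-1}` for `m < n`. -/
def DeltaFam' (k n : ℕ) (F : Finset ℕ) : Prop :=
  (BFacet 1 ((4 * k - 1) * n) k F ∧
    ¬ ∃ m < n, F ⊆ Finset.Icc ((4 * k - 1) * m + 1) ((4 * k - 1) * m + 4 * k - 1)) ∨
  (∃ m < n, F = Finset.image (fun j : Fin (2 * k) => (4 * k - 1) * m + 2 * j.val + 1)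
      Finset.univ)

/-- The transversal number of `Δ'_n`. -/
noncomputable def DeltaT' (k n : ℕ) : ℕ :=
  sInf {c : ℕ | ∃ S : Finset ℕ, S ⊆ Finset.Icc 1 ((4 * k - 1) * n) ∧
    (∀ F, DeltaFam' k n F → (S ∩ F).Nonempty) ∧ S.card = c}

theorem upper17 (k n : ℕ) (hk : 2 ≤ k) :
    ∃ S : Finset ℕ, S ⊆ Finset.Icc 1 ((4 * k - 1) * n) ∧
    (∀ F, DeltaFam' k n F → (S ∩ F).Nonempty) ∧ S.card ≤ n * (2 * k) := by
  obtain ⟨N, hN⟩ : ∃ N, N = 4 * k - 1 := ⟨_, rfl⟩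
  refine ⟨(Finset.range n ×ˢ Finset.range (2 * k)).image
    (fun p => N * p.1 + 2 * p.2 + 1), ?_, ?_, ?_⟩
  · intro x hx
    simp only [Finset.mem_image, Finset.mem_product, Finset.mem_range, Prod.exists] at hx
    obtain ⟨m, j, ⟨hm, hj⟩, rfl⟩ := hx
    rw [← hN, Finset.mem_Icc]
    have : N * (m + 1) ≤ N * n := Nat.mul_le_mul_left _ hm
    rw [mul_add, mul_one] at this
    omega
  · rintro F (⟨⟨i, h1, h2, rfl⟩, -⟩ | ⟨m, hm, rfl⟩)
    · obtain ⟨hx1, hx2⟩ := h1 ⟨0, by omega⟩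
      obtain ⟨x, hx⟩ : ∃ x, x = i ⟨0, by omega⟩ := ⟨_, rfl⟩
      rw [← hx] at hx1 hx2
      rw [← hN] at hx2
      have hNpos : 0 < N := by omega
      have hmod := Nat.div_add_mod (x - 1) N
      have hlt := Nat.mod_lt (x - 1) hNpos
      have hm : (x - 1) / N < n := by
        rw [Nat.div_lt_iff_lt_mul hNpos, mul_comm]; omega
      obtain ⟨m, hm'⟩ : ∃ m, m = (x - 1) / N := ⟨_, rfl⟩
      obtain ⟨r, hr'⟩ : ∃ r, r = (x - 1) % N := ⟨_, rfl⟩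
      rw [← hm', ← hr'] at hmod
      rw [← hr'] at hlt
      rw [← hm'] at hm
      rcases Nat.even_or_odd' r with ⟨c, hc | hc⟩
      · refine ⟨x, ?_⟩
        simp only [Finset.mem_inter, Finset.mem_image, Finset.mem_product, Finset.mem_range,
          Prod.exists, Finset.mem_biUnion, Finset.mem_univ, true_and]
        refine ⟨⟨m, c, ⟨hm, by omega⟩, by omega⟩, ⟨0, by omega⟩, ?_⟩
        simp [hx]
      · refine ⟨x + 1, ?_⟩
        simp only [Finset.mem_inter, Finset.mem_image, Finset.mem_product, Finset.mem_range,
          Prod.exists, Finset.mem_biUnion, Finset.mem_univ, true_and]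
        refine ⟨⟨m, c + 1, ⟨hm, by omega⟩, by omega⟩, ⟨0, by omega⟩, ?_⟩
        simp [hx]
    · refine ⟨N * m + 2 * 0 + 1, ?_⟩
      simp only [Finset.mem_inter, Finset.mem_image, Finset.mem_product, Finset.mem_range,
          Prod.exists, Finset.mem_univ, true_and]
      exact ⟨⟨m, 0, ⟨hm, by omega⟩, rfl⟩, ⟨0, by omega⟩, by simp [hN]⟩
  · refine Finset.card_image_le.trans ?_
    simp

theorem good17 (k m N : ℕ) (hN : N = 4 * k - 1) (S : Finset ℕ)
    (hodd : ∃ j < 2 * k, N * m + 2 * j + 1 ∈ S)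
    (hgood : ∀ i, N * m + 1 ≤ i → i + 1 ≤ N * m + N → i ∈ S ∨ i + 1 ∈ S) :
    2 * k ≤ (S ∩ Finset.Icc (N * m + 1) (N * m + N)).card := by
  obtain ⟨j0, hj0, hS⟩ := hodd
  have key : ∀ j, ∃ y, j < 2 * k → y ∈ S ∧ N * m + 1 ≤ y ∧ y ≤ N * m + N ∧
      ((j < j0 ∧ (y = N * m + 2 * j + 1 ∨ y = N * m + 2 * j + 2)) ∨
       (j = j0 ∧ y = N * m + 2 * j + 1) ∨
       (j0 < j ∧ (y = N * m + 2 * j ∨ y = N * m + 2 * j + 1))) := by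
    intro j
    by_cases hj : j < 2 * k
    swap
    · exact ⟨0, fun h => absurd h hj⟩
    rcases lt_trichotomy j j0 with h | h | h
    · rcases hgood (N * m + 2 * j + 1) (by omega) (by omega) with h' | h'
      · exact ⟨_, fun _ => ⟨h', by omega, by omega, by omega⟩⟩
      · exact ⟨_, fun _ => ⟨h', by omega, by omega, by omega⟩⟩
    · subst h
      exact ⟨_, fun _ => ⟨hS, by omega, by omega, by omega⟩⟩
    · rcases hgood (N * m + 2 * j) (by omega) (by omega) with h' | h'
      · exact ⟨_, fun _ => ⟨h', by omega, by omega, by omega⟩⟩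
      · exact ⟨_, fun _ => ⟨h', by omega, by omega, by omega⟩⟩
  choose f hf using key
  have := Finset.card_le_card_of_injOn (s := Finset.range (2 * k))
    (t := S ∩ Finset.Icc (N * m + 1) (N * m + N)) f ?_ ?_
  · simpa using this
  · intro j hj
    have hj' : j < 2 * k := by simpa using hj
    obtain ⟨h1, h2, h3, -⟩ := hf j hj'
    simp [h1, h2, h3]
  · intro a ha b hb hab
    have ha' : a < 2 * k := by simpa using ha
    have hb' : b < 2 * k := by simpa using hb
    obtain ⟨-, -, -, h1⟩ := hf a ha'
    obtain ⟨-, -, -, h2⟩ := hf b hb'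
    rw [hab] at h1
    omega

theorem lower17 (k n : ℕ) (hk : 2 ≤ k) (S : Finset ℕ)
    (hS : ∀ F, DeltaFam' k n F → (S ∩ F).Nonempty) :
    n * (2 * k) ≤ S.card + k * (2 * k) := by
  classical
  obtain ⟨N, hN⟩ : ∃ N, N = 4 * k - 1 := ⟨_, rfl⟩
  have hsep : ∀ a b : ℕ, a < b → N * a + N ≤ N * b := by
    intro a b hab
    have := Nat.mul_le_mul_left N hab
    rwa [Nat.succ_eq_add_one, mul_add, mul_one] at this
  let P : ℕ → Prop := fun m => ∀ i, N * m + 1 ≤ i → i + 1 ≤ N * m + N → i ∈ S ∨ i + 1 ∈ S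
  have hbad : ((Finset.range n).filter (fun m => ¬ P m)).card ≤ k := by
    by_contra hcon
    obtain ⟨B, hB, hBk⟩ := Finset.exists_subset_card_eq (Nat.le_of_lt (not_le.mp hcon))
    let e := B.orderEmbOfFin hBk
    have he : ∀ j, e j < n ∧ ∃ i, N * e j + 1 ≤ i ∧ i + 1 ≤ N * e j + N ∧ i ∉ S ∧ i + 1 ∉ S := by
      intro j
      have := hB (B.orderEmbOfFin_mem hBk j)
      rw [Finset.mem_filter, Finset.mem_range] at this
      refine ⟨this.1, ?_⟩
      have h2 := this.2
      simp only [P] at h2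
      push Not at h2
      exact h2
    choose hen i hi1 hi2 hi3 hi4 using he
    obtain ⟨x, hx⟩ := hS (Finset.univ.biUnion fun j => {i j, i j + 1}) (by
      left
      refine ⟨⟨i, ?_, ?_, rfl⟩, ?_⟩
      · intro j
        have h1 := hi1 j
        have h2 := hi2 j
        have h3 := hsep _ _ (hen j)
        rw [← hN]
        omega
      · intro j j' hjj
        have h0 := hsep _ _ (e.strictMono hjj)
        have h1 := hi1 j'
        have h2 := hi2 j
        omega
      · rintro ⟨m, hm, hsub⟩
        have hall : ∀ j, e j = m := by
          intro j
          have hmem : i j ∈ Finset.univ.biUnion fun j => ({i j, i j + 1} : Finset ℕ) := by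
            simp only [Finset.mem_biUnion, Finset.mem_univ, true_and]
            exact ⟨j, by simp⟩
          have := hsub hmem
          rw [← hN, Finset.mem_Icc] at this
          have h1 := hi1 j
          have h2 := hi2 j
          rcases lt_trichotomy (e j) m with h | h | h
          · have := hsep _ _ h
            omega
          · exact h
          · have := hsep _ _ h
            omega
        have h01 : e ⟨0, by omega⟩ = e ⟨1, by omega⟩ := by rw [hall, hall]
        have := e.injective h01
        simp at this)
    simp only [Finset.mem_inter, Finset.mem_biUnion, Finset.mem_univ, true_and,
      Finset.mem_insert, Finset.mem_singleton] at hx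
    obtain ⟨hxS, j, rfl | rfl⟩ := hx
    · exact hi3 j hxS
    · exact hi4 j hxS
  have hgood : ((Finset.range n).filter P).card * (2 * k) ≤ S.card := by
    have hle : ∀ m ∈ (Finset.range n).filter P,
        2 * k ≤ (S ∩ Finset.Icc (N * m + 1) (N * m + N)).card := by
      intro m hm
      rw [Finset.mem_filter, Finset.mem_range] at hm
      refine good17 k m N hN S ?_ hm.2
      obtain ⟨x, hx⟩ := hS _ (Or.inr ⟨m, hm.1, rfl⟩)
      simp only [Finset.mem_inter, Finset.mem_image, Finset.mem_univ, true_and] at hx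
      obtain ⟨hxS, j, rfl⟩ := hx
      rw [← hN] at hxS
      exact ⟨j, j.2, hxS⟩
    have h1 := Finset.card_nsmul_le_sum _ _ _ hle
    rw [← Finset.card_biUnion] at h1
    · refine le_trans (by simpa using h1) (Finset.card_le_card ?_)
      intro x hx
      simp only [Finset.mem_biUnion, Finset.mem_inter] at hx
      exact hx.choose_spec.2.1
    · intro a _ b _ hab
      change Disjoint _ _
      rw [Finset.disjoint_left]
      intro x hxa hxb
      rw [Finset.mem_inter, Finset.mem_Icc] at hxa hxb
      rcases lt_or_gt_of_ne hab with h | h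
      · have := hsep _ _ h
        omega
      · have := hsep _ _ h
        omega
  have hsum := Finset.card_filter_add_card_filter_not (s := Finset.range n) P
  rw [Finset.card_range] at hsum
  have := Nat.mul_le_mul_right (2 * k) hbad
  have h3 := Nat.add_le_add hgood this
  rwa [← add_mul, hsum] at h3

theorem stmt_17 (k : ℕ) (hk : 2 ≤ k) :
    Filter.Tendsto (fun n : ℕ => (DeltaT' k n : ℝ) / ((4 * (k : ℝ) - 1) * (n : ℝ)))
      Filter.atTop (nhds (2 * (k : ℝ) / (4 * (k : ℝ) - 1))) := by
  have hk' : (2 : ℝ) ≤ k := by exact_mod_cast hk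
  have hpos : (0 : ℝ) < 4 * (k : ℝ) - 1 := by linarith
  have hup : ∀ n, DeltaT' k n ≤ n * (2 * k) := by
    intro n
    obtain ⟨S, h1, h2, h3⟩ := upper17 k n hk
    refine le_trans ?_ h3
    unfold DeltaT'
    exact Nat.sInf_le ⟨S, h1, h2, rfl⟩
  have hlow : ∀ n, n * (2 * k) ≤ DeltaT' k n + k * (2 * k) := by
    intro n
    obtain ⟨S, h1, h2, h3⟩ := upper17 k n hk
    have hne : {c : ℕ | ∃ S : Finset ℕ, S ⊆ Finset.Icc 1 ((4 * k - 1) * n) ∧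
      (∀ F, DeltaFam' k n F → (S ∩ F).Nonempty) ∧ S.card = c}.Nonempty := ⟨_, S, h1, h2, rfl⟩
    obtain ⟨S', -, h2', h3'⟩ := Nat.sInf_mem hne
    have := lower17 k n hk S' h2'
    rw [h3'] at this
    exact this
  have hlim : Filter.Tendsto (fun n : ℕ => 2 * (k : ℝ) / (4 * (k : ℝ) - 1) -
      (k * (2 * k) / (4 * (k : ℝ) - 1)) / (n : ℝ)) Filter.atTop
      (nhds (2 * (k : ℝ) / (4 * (k : ℝ) - 1))) := by
    simpa using tendsto_const_nhds.sub
      (tendsto_const_div_atTop_nhds_zero_nat (k * (2 * k) / (4 * (k : ℝ) - 1)))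
  refine tendsto_of_tendsto_of_tendsto_of_le_of_le' hlim tendsto_const_nhds ?_ ?_
  · filter_upwards [Filter.eventually_gt_atTop 0] with n hn
    have hn' : (0 : ℝ) < n := by exact_mod_cast hn
    have h : (n : ℝ) * (2 * k) ≤ DeltaT' k n + k * (2 * k) := by exact_mod_cast hlow n
    rw [le_div_iff₀ (by positivity)]
    have : (2 * (k : ℝ) / (4 * (k : ℝ) - 1) - (k * (2 * k) / (4 * (k : ℝ) - 1)) / (n : ℝ)) *
        ((4 * (k : ℝ) - 1) * n) = n * (2 * k) - k * (2 * k) := by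
      have hne := hpos.ne'
      generalize 4 * (k : ℝ) - 1 = D at hne
      field_simp
    rw [this]
    linarith
  · filter_upwards [Filter.eventually_gt_atTop 0] with n hn
    have hn' : (0 : ℝ) < n := by exact_mod_cast hn
    have h : (DeltaT' k n : ℝ) ≤ n * (2 * k) := by exact_mod_cast hup n
    rw [div_le_iff₀ (by positivity)]
    have : (2 * (k : ℝ) / (4 * (k : ℝ) - 1)) * ((4 * (k : ℝ) - 1) * n) = n * (2 * k) := by
      have hne := hpos.ne'
      generalize 4 * (k : ℝ) - 1 = D at hne
      field_simp
    rw [this]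
    exact h
end

section
/- For every integer k ≥ 1 there exists a constant C > 0 (depending only on k) such that the following holds for every positive integer n: if F is a family of 5-element subsets of [n] that contains all sets of the forms (a) {i, i+1, j, j+1, j+3} for all i ≥ 1 and all j with i+k+1 < j ≤ n−3, (b) {i, i+1, j, j+2, j+3} for all i ≥ 1 and all j with i+k+2 < j ≤ n−3, (c) {i−k, i+1, i+2, i+4, i+5} for all i with k+1 ≤ i ≤ n−5, and (d) {i−ℓ, i−ℓ+1, i+1, i+4, i+5} for all ℓ with 1 ≤ ℓ ≤ k and all i with ℓ < i ≤ n−5, then every transversal of F has size at least ((k+5)/(2(k+6)))·n − C. -/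
/-- Potential of a window of six consecutive bits (last bit `g`). -/
def pot19 (a b c d e g : Bool) : ℤ :=
  bif g then
    bif e then (bif d then 3 else 2)
    else bif d then (bif b then 2 else bif a then 2 else 1)
    else (bif (a && b && c) then 2 else 1)
  else
    bif e then
      (bif d then (bif c then 2 else 1)
       else bif c then 1 else bif (a && b) then 1 else 0)
    else (bif (b && c && d) then 1 else 0)

theorem pot19_le (a b c d e g : Bool) : pot19 a b c d e g ≤ 3 := by
  revert a b c d e g; decide

theorem pot19_nonneg (a b c d e g : Bool) : 0 ≤ pot19 a b c d e g := by
  revert a b c d e g; decide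

def pat3 (a b c : Bool) : Bool := a && b && c

theorem pot19_step : ∀ a b c d e g x : Bool,
    pat3 a b d = false → pat3 b c e = false → pat3 c d g = false → pat3 d e x = false →
    pat3 a c d = false → pat3 b d e = false → pat3 c e g = false → pat3 d g x = false →
    (a && b && c && g && x) = false →
    pot19 a b c d e g + (bif x then 1 else -1) ≤ pot19 b c d e g x := by
  decide

def exc19 (u : ℕ → Bool) (t : ℕ) : ℤ := ∑ s ∈ Finset.range t, (bif u s then 1 else -1)

theorem exc19_succ (u : ℕ → Bool) (t : ℕ) :
    exc19 u (t + 1) = exc19 u t + (bif u t then 1 else -1) := by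
  simp [exc19, Finset.sum_range_succ]

theorem exc19_add (u : ℕ → Bool) (s m : ℕ) : exc19 u (s + m) ≤ exc19 u s + m := by
  induction m with
  | zero => simp
  | succ m ih =>
    rw [← add_assoc, exc19_succ]
    push_cast
    cases u (s + m) <;> simp <;> linarith

theorem exc19_lemA (u : ℕ → Bool) (P n : ℕ)
    (h1 : ∀ t, P ≤ t → t + 3 ≤ n → pat3 (u t) (u (t+1)) (u (t+3)) = false)
    (h2 : ∀ t, P ≤ t → t + 3 ≤ n → pat3 (u t) (u (t+2)) (u (t+3)) = false)
    (h3 : ∀ t, P ≤ t → t + 6 ≤ n →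
      (u t && u (t+1) && u (t+2) && u (t+5) && u (t+6)) = false) (m : ℕ) :
    P + m + 6 ≤ n + 1 → exc19 u (P + m + 6) ≤ exc19 u P + 6 +
      pot19 (u (P+m)) (u (P+m+1)) (u (P+m+2)) (u (P+m+3)) (u (P+m+4)) (u (P+m+5)) := by
  induction m with
  | zero =>
    intro _
    have := exc19_add u P 6
    have := pot19_nonneg (u (P+0)) (u (P+0+1)) (u (P+0+2)) (u (P+0+3)) (u (P+0+4)) (u (P+0+5))
    push_cast at *
    simp only [add_zero] at *
    linarith
  | succ m ih =>
    intro hm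
    have ih := ih (by omega)
    generalize hq : P + m = q at ih
    have e : P + (m + 1) = q + 1 := by omega
    rw [e]
    have := pot19_step (u q) (u (q+1)) (u (q+2)) (u (q+3)) (u (q+4)) (u (q+5)) (u (q+6))
      (h1 q (by omega) (by omega)) (h1 (q+1) (by omega) (by omega))
      (h1 (q+2) (by omega) (by omega)) (h1 (q+3) (by omega) (by omega))
      (h2 q (by omega) (by omega)) (h2 (q+1) (by omega) (by omega))
      (h2 (q+2) (by omega) (by omega)) (h2 (q+3) (by omega) (by omega))
      (h3 q (by omega) (by omega))
    have e2 : q + 1 + 6 = q + 6 + 1 := by omega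
    rw [e2, exc19_succ]
    simp only [add_assoc, Nat.reduceAdd] at *
    linarith

theorem exc19_lemB (u : ℕ → Bool) (a : ℕ)
    (h : ∀ i, 1 ≤ i → i + 1 ≤ a → (u i && u (i+1)) = false) (t : ℕ) (ht : t + 1 ≤ a) :
    exc19 u (t + 2) ≤ 1 + (bif u (t+1) then 1 else 0) := by
  induction t with
  | zero =>
    simp only [exc19, Finset.sum_range_succ, Finset.sum_range_zero]
    simp only [zero_add]
    cases u 0 <;> cases u 1 <;> simp
  | succ t ih =>
    have ih := ih (by omega)
    have hh := h (t+1) (by omega) (by omega)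
    rw [show t + 1 + 2 = t + 2 + 1 by omega, exc19_succ]
    simp only [add_assoc, Nat.reduceAdd] at *
    revert ih hh
    cases u (t+1) <;> cases u (t+2) <;> simp <;> intros <;> linarith

theorem exc19_card (S : Finset ℕ) (n : ℕ) (hS : S ⊆ Finset.Icc 1 n) :
    exc19 (fun t => decide (t ∉ S)) (n + 1) = n + 1 - 2 * S.card := by
  have h1 : ∀ s, (bif decide (s ∉ S) then (1:ℤ) else -1) = 1 - 2 * (if s ∈ S then 1 else 0) := by
    intro s
    by_cases h : s ∈ S <;> simp [h]
  unfold exc19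
  rw [Finset.sum_congr rfl (fun s _ => h1 s), Finset.sum_sub_distrib, ← Finset.mul_sum,
    Finset.sum_ite_mem]
  have : Finset.range (n+1) ∩ S = S := by
    apply Finset.inter_eq_right.2
    intro x hx
    have := Finset.mem_Icc.1 (hS hx)
    simp; omega
  rw [this]
  simp


theorem stmt_19 (k : ℕ) (hk : 1 ≤ k) :
    ∃ C : ℝ, 0 < C ∧ ∀ n : ℕ, ∀ Fam : Finset (Finset ℕ),
      (∀ e ∈ Fam, e ⊆ Finset.Icc 1 n ∧ e.card = 5) →
      (∀ i j : ℕ, 1 ≤ i → i + k + 1 < j → j + 3 ≤ n →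
        ({i, i + 1, j, j + 1, j + 3} : Finset ℕ) ∈ Fam) →
      (∀ i j : ℕ, 1 ≤ i → i + k + 2 < j → j + 3 ≤ n →
        ({i, i + 1, j, j + 2, j + 3} : Finset ℕ) ∈ Fam) →
      (∀ i : ℕ, k + 1 ≤ i → i + 5 ≤ n →
        ({i - k, i + 1, i + 2, i + 4, i + 5} : Finset ℕ) ∈ Fam) →
      (∀ ℓ i : ℕ, 1 ≤ ℓ → ℓ ≤ k → ℓ < i → i + 5 ≤ n →
        ({i - ℓ, i - ℓ + 1, i + 1, i + 4, i + 5} : Finset ℕ) ∈ Fam) →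
      ∀ S : Finset ℕ, S ⊆ Finset.Icc 1 n → (∀ e ∈ Fam, (S ∩ e).Nonempty) →
        (((k : ℝ) + 5) / (2 * ((k : ℝ) + 6))) * (n : ℝ) - C ≤ (S.card : ℝ) := by
  refine ⟨k + 30, by positivity, ?_⟩
  intro n Fam _ ha hb _ hd S hS hT
  set u : ℕ → Bool := fun t => decide (t ∉ S) with hu
  have key : exc19 u (n + 1) ≤ k + 20 := by
    by_cases hex : ∃ i, 1 ≤ i ∧ i + 1 ≤ n ∧ (u i && u (i+1)) = true
    · classical
      obtain ⟨i, ⟨hi1, hin, hui⟩, hmin⟩ : ∃ i, (1 ≤ i ∧ i + 1 ≤ n ∧ (u i && u (i+1)) = true) ∧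
          ∀ j < i, ¬ (1 ≤ j ∧ j + 1 ≤ n ∧ (u j && u (j+1)) = true) :=
        ⟨Nat.find hex, Nat.find_spec hex, fun j hj => Nat.find_min hex hj⟩
      have hB : exc19 u (i + 1) ≤ 2 := by
        have := exc19_lemB u i (fun j hj1 hj2 => by
          have := hmin j (by omega)
          rw [← Bool.not_eq_true]
          intro hc
          exact this ⟨hj1, by omega, hc⟩) (i - 1) (by omega)
        rw [show i - 1 + 2 = i + 1 by omega] at this
        refine this.trans ?_
        cases u (i - 1 + 1) <;> simp
      have hS1 : i ∉ S ∧ i + 1 ∉ S := by simpa [hu] using hui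
      by_cases hP : i + k + 3 + 6 ≤ n + 1
      · have hA := exc19_lemA u (i + k + 3) n ?_ ?_ ?_ (n + 1 - 6 - (i + k + 3)) (by omega)
        · have h3 := exc19_add u (i + 1) (k + 2)
          rw [show i + 1 + (k + 2) = i + k + 3 by omega] at h3
          rw [show i + k + 3 + (n + 1 - 6 - (i + k + 3)) + 6 = n + 1 by omega] at hA
          have := hA.trans (add_le_add_right (pot19_le _ _ _ _ _ _) _)
          push_cast at *
          linarith
        · intro t ht1 ht2
          have := hT _ (ha i t hi1 (by omega) ht2)
          obtain ⟨x, hx⟩ := this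
          simp only [Finset.mem_inter, Finset.mem_insert, Finset.mem_singleton] at hx
          simp only [pat3, hu]
          grind
        · intro t ht1 ht2
          have := hT _ (hb i t hi1 (by omega) ht2)
          obtain ⟨x, hx⟩ := this
          simp only [Finset.mem_inter, Finset.mem_insert, Finset.mem_singleton] at hx
          simp only [pat3, hu]
          grind
        · intro t ht1 ht2
          have := hT _ (hd 1 (t + 1) le_rfl hk (by omega) (by omega))
          obtain ⟨x, hx⟩ := this
          simp only [Finset.mem_inter, Finset.mem_insert, Finset.mem_singleton,
            Nat.add_sub_cancel, add_assoc, Nat.reduceAdd] at hx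
          simp only [hu]
          grind
      · have h3 := exc19_add u (i + 1) (n - i)
        rw [show i + 1 + (n - i) = n + 1 by omega] at h3
        have : ((n - i : ℕ) : ℤ) ≤ k + 8 := by omega
        linarith
    · rcases Nat.eq_zero_or_pos n with h0 | h0
      · have := exc19_add u 0 (n + 1)
        subst h0
        simp [exc19] at this ⊢
        linarith
      · have := exc19_lemB u n (fun j hj1 hj2 => by
          rw [← Bool.not_eq_true]
          intro hc
          exact hex ⟨j, hj1, hj2, hc⟩) (n - 1) (by omega)
        rw [show n - 1 + 2 = n + 1 by omega] at this
        have h2 : (1:ℤ) + (bif u (n - 1 + 1) then 1 else 0) ≤ 2 := by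
          cases u (n - 1 + 1) <;> simp
        linarith
  rw [hu, exc19_card S n hS] at key
  have key' : (n : ℝ) + 1 - 2 * S.card ≤ k + 20 := by exact_mod_cast key
  have hk0 : (0:ℝ) ≤ k := by positivity
  have hc : ((k : ℝ) + 5) / (2 * ((k : ℝ) + 6)) ≤ 1 / 2 := by
    rw [div_le_div_iff₀ (by positivity) (by positivity)]
    linarith
  have hn : (0:ℝ) ≤ n := by positivity
  have := mul_le_mul_of_nonneg_right hc hn
  linarith
end
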